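/- arXiv:2401.01878 — 2 statements merged into one kernel-verified Lean document; each statement's English description precedes it below -/
import Mathlib

section
/- Let G be a group and let V be a ℚ-vector space equipped with a ℚ-linear action of G such that the G-orbit of every element of V is finite. Then the composite of the inclusion of the invariants V^G into V with the projection of V onto the coinvariants V_G is a bijection (a ℚ-linear isomorphism V^G ≅ V_G). -/
/-- Stabilizer of a vector. -/
def stabRep {G V : Type*} [Group G] [AddCommGroup V] [Module ℚ V]
    (ρ : Representation ℚ G V) (v : V) : Subgroup G where
  carrier := {g | ρ g v = v}
  one_mem' := by simp
  mul_mem' := by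
    intro a b ha hb
    simp only [Set.mem_setOf_eq] at *
    rw [map_mul, Module.End.mul_apply, hb, ha]
  inv_mem' := by
    intro a ha
    simp only [Set.mem_setOf_eq] at *
    conv_lhs => rw [← ha]
    simp

theorem stabRep_finiteIndex {G V : Type*} [Group G] [AddCommGroup V] [Module ℚ V]
    (ρ : Representation ℚ G V) (v : V) (h : (Set.range fun g : G => ρ g v).Finite) :
    (stabRep ρ v).FiniteIndex := by
  have : Finite (Set.range fun g : G => ρ g v) := h
  have : Finite (G ⧸ stabRep ρ v) := by
    refine Finite.of_injective
      (fun q : G ⧸ stabRep ρ v => (⟨ρ q.out v, q.out, rfl⟩ : Set.range fun g : G => ρ g v)) ?_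
    intro a b hab
    have hab' : ρ a.out v = ρ b.out v := congrArg Subtype.val hab
    rw [← a.out_eq', ← b.out_eq']
    refine QuotientGroup.eq.2 ?_
    change ρ (a.out⁻¹ * b.out) v = v
    rw [map_mul, Module.End.mul_apply, ← hab']
    simp
  exact Subgroup.finiteIndex_of_finite_quotient

theorem rep_out {G V : Type*} [Group G] [AddCommGroup V] [Module ℚ V]
    (ρ : Representation ℚ G V) (v : V) (K : Subgroup G) (hK : K ≤ stabRep ρ v) (a : G) :
    ρ (a : G ⧸ K).out v = ρ a v := by
  have h : a⁻¹ * (a : G ⧸ K).out ∈ K := QuotientGroup.eq.1 (a : G ⧸ K).out_eq'.symm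
  have h2 : ρ (a⁻¹ * (a : G ⧸ K).out) v = v := hK h
  conv_rhs => rw [← h2]
  rw [← Module.End.mul_apply, ← map_mul]
  simp

/-- Let `G` be a group acting `ℚ`-linearly on a `ℚ`-vector space `V` such
that every `G`-orbit is finite.  Then the composite of the inclusion of the invariants
`V^G ↪ V` with the projection `V ↠ V_G` onto the coinvariants (the quotient of `V` by the
subspace spanned by the elements `g•v − v`) is a `ℚ`-linear bijection `V^G ≅ V_G`. -/
theorem invariants_to_coinvariants_bijective
    {G V : Type*} [Group G] [AddCommGroup V] [Module ℚ V]
    (ρ : Representation ℚ G V)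
    (hfin : ∀ v : V, (Set.range fun g : G => ρ g v).Finite) :
    Function.Bijective
      ((Submodule.span ℚ {x : V | ∃ (g : G) (v : V), ρ g v - v = x}).mkQ.comp
        ρ.invariants.subtype) := by
  classical
  constructor
  · rw [injective_iff_map_eq_zero]
    rintro ⟨x, hx⟩ h0
    have hmem : x ∈ Submodule.span ℚ {x : V | ∃ (g : G) (v : V), ρ g v - v = x} := by
      simpa using h0
    have key : ∃ H : Subgroup G, H.FiniteIndex ∧ ∀ (K : Subgroup G) [K.FiniteIndex],
        K.Normal → K ≤ H → ∑ᶠ q : G ⧸ K, ρ q.out x = 0 := by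
      clear h0 hx
      induction hmem using Submodule.span_induction with
      | mem x hx =>
        obtain ⟨g, v, rfl⟩ := hx
        refine ⟨stabRep ρ v, stabRep_finiteIndex ρ v (hfin v), ?_⟩
        intro K _ hn hK
        have := Fintype.ofFinite (G ⧸ K)
        rw [finsum_eq_sum_of_fintype]
        simp only [map_sub, Finset.sum_sub_distrib]
        rw [sub_eq_zero]
        refine Fintype.sum_equiv (Equiv.mulRight (g : G ⧸ K)) _ _ ?_
        intro q
        rw [← Module.End.mul_apply, ← map_mul, ← rep_out ρ v K hK (q.out * g)]
        simp
      | zero => exact ⟨⊤, inferInstance, by simp⟩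
      | add x y _ _ h1 h2 =>
        obtain ⟨H1, f1, h1⟩ := h1
        obtain ⟨H2, f2, h2⟩ := h2
        refine ⟨H1 ⊓ H2, inferInstance, ?_⟩
        intro K _ hn hK
        have a := h1 K hn (hK.trans inf_le_left)
        have b := h2 K hn (hK.trans inf_le_right)
        have := Fintype.ofFinite (G ⧸ K)
        rw [finsum_eq_sum_of_fintype] at *
        simp only [map_add, Finset.sum_add_distrib, a, b, add_zero]
      | smul c x _ h1 =>
        obtain ⟨H1, f1, h1⟩ := h1
        refine ⟨H1, f1, ?_⟩
        intro K _ hn hK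
        have a := h1 K hn hK
        have := Fintype.ofFinite (G ⧸ K)
        rw [finsum_eq_sum_of_fintype] at *
        simp only [map_smul, ← Finset.smul_sum, a, smul_zero]
    obtain ⟨H, hH, h⟩ := key
    have a := h H.normalCore inferInstance H.normalCore_le
    have := Fintype.ofFinite (G ⧸ H.normalCore)
    rw [finsum_eq_sum_of_fintype] at a
    rw [Representation.mem_invariants] at hx
    simp only [hx, Finset.sum_const, Finset.card_univ] at a
    rw [← Nat.cast_smul_eq_nsmul ℚ, smul_eq_zero] at a
    rcases a with a | a
    · exact absurd a (by exact_mod_cast Fintype.card_ne_zero)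
    · exact Subtype.ext a
  · intro y
    obtain ⟨v, rfl⟩ := Submodule.mkQ_surjective _ y
    have hfi := stabRep_finiteIndex ρ v (hfin v)
    obtain ⟨K, hn, hKf, hK⟩ : ∃ K : Subgroup G, K.Normal ∧ K.FiniteIndex ∧ K ≤ stabRep ρ v :=
      ⟨(stabRep ρ v).normalCore, inferInstance, inferInstance, Subgroup.normalCore_le _⟩
    have := Fintype.ofFinite (G ⧸ K)
    have hc : (Fintype.card (G ⧸ K) : ℚ) ≠ 0 := by exact_mod_cast Fintype.card_ne_zero
    refine ⟨⟨(Fintype.card (G ⧸ K) : ℚ)⁻¹ • ∑ q : G ⧸ K, ρ q.out v, ?_⟩, ?_⟩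
    · rw [Representation.mem_invariants]
      intro g
      rw [map_smul, map_sum]
      congr 1
      refine Fintype.sum_equiv (Equiv.mulLeft (g : G ⧸ K)) _ _ ?_
      intro q
      rw [← Module.End.mul_apply, ← map_mul, ← rep_out ρ v K hK (g * q.out)]
      simp
    · simp only [LinearMap.comp_apply, Submodule.subtype_apply, Submodule.mkQ_apply]
      rw [Submodule.Quotient.eq]
      have e : (Fintype.card (G ⧸ K) : ℚ)⁻¹ • ∑ q : G ⧸ K, ρ q.out v - v =
          (Fintype.card (G ⧸ K) : ℚ)⁻¹ • ∑ q : G ⧸ K, (ρ q.out v - v) := by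
        rw [Finset.sum_sub_distrib, smul_sub, Finset.sum_const, Finset.card_univ,
          ← Nat.cast_smul_eq_nsmul ℚ, smul_smul, inv_mul_cancel₀ hc, one_smul]
      rw [e]
      exact Submodule.smul_mem _ _ (Submodule.sum_mem _ fun q _ =>
        Submodule.subset_span ⟨q.out, v, rfl⟩)
end

section
/- Let p be a prime and N ≥ 1 an integer, and let G = SL_N(ℤ_p) be the special linear group of N×N matrices of determinant 1 over the p-adic integers, regarded as a topological group with the topology induced from the matrix entries. Then the set of conjugacy classes of closed subgroups of G (i.e., the quotient of the set of closed subgroups of G by the equivalence relation identifying H and K whenever K = gHg⁻¹ for some g ∈ G) is countable if and only if N ≤ 2. -/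
namespace SLC
open Matrix

/-- closed subgroups -/
abbrev CS (p : ℕ) [Fact p.Prime] (N : ℕ) :=
  {H : Subgroup (Matrix.SpecialLinearGroup (Fin N) ℤ_[p]) //
            IsClosed (H.1 : Set (Matrix.SpecialLinearGroup (Fin N) ℤ_[p]))}

/-- the conjugacy relation -/
abbrev rel (p : ℕ) [Fact p.Prime] (N : ℕ) : CS p N → CS p N → Prop := fun H K =>
        ∃ g : Matrix.SpecialLinearGroup (Fin N) ℤ_[p],
          Subgroup.map (MulAut.conj g).toMonoidHom H.1 = K.1

variable {p : ℕ} [Fact p.Prime]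

lemma rel_equiv (N : ℕ) : Equivalence (rel p N) where
  refl H := ⟨1, by
    have : (MulAut.conj (1 : Matrix.SpecialLinearGroup (Fin N) ℤ_[p])).toMonoidHom
      = MonoidHom.id _ := by ext x; simp
    rw [this, Subgroup.map_id]⟩
  symm := by
    rintro H K ⟨g, h⟩
    refine ⟨g⁻¹, ?_⟩
    rw [← h, Subgroup.map_map]
    have : (MulAut.conj g⁻¹).toMonoidHom.comp (MulAut.conj g).toMonoidHom
      = MonoidHom.id _ := by ext x; simp [mul_assoc]
    rw [this, Subgroup.map_id]
  trans := by
    rintro H K L ⟨g, h⟩ ⟨g', h'⟩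
    refine ⟨g' * g, ?_⟩
    rw [← h', ← h, Subgroup.map_map]
    congr 1
    ext x; simp [mul_assoc]

lemma rel_of_mk_eq {N : ℕ} {H K : CS p N} (h : Quot.mk (rel p N) H = Quot.mk (rel p N) K) :
    rel p N H K := by
  have := Quot.eqvGen_exact h
  rwa [(rel_equiv N).eqvGen_iff] at this

lemma char_inj (κ : AddChar ℤ_[p] ℤ_[p]) (hc : Continuous κ)
    (h1 : ∀ n : ℕ, 0 < n → (κ 1) ^ n ≠ 1) : Function.Injective κ := by
  intro s t hst
  by_contra hne
  set z := s - t with hz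
  have hz0 : z ≠ 0 := sub_ne_zero.mpr hne
  have hkz : κ z = 1 := by
    have : κ z * κ t = κ t := by rw [← AddChar.map_add_eq_mul]; simp [hz, hst]
    have hu : IsUnit (κ t) := AddChar.val_isUnit κ t
    exact hu.mul_eq_right.mp (by simpa using this)
  have hall : ∀ u : ℤ_[p], κ (u * z) = 1 := by
    have : (fun u : ℤ_[p] => κ (u * z)) = fun _ => 1 := by
      apply Continuous.ext_on (PadicInt.denseRange_natCast (p := p))
        (by fun_prop) continuous_const
      rintro _ ⟨n, rfl⟩
      simp only
      rw [← nsmul_eq_mul, AddChar.map_nsmul_eq_pow, hkz, one_pow]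
    intro u; exact congrFun this u
  have := PadicInt.unitCoeff_spec hz0
  have h2 := hall (((PadicInt.unitCoeff hz0)⁻¹ : ℤ_[p]ˣ) : ℤ_[p])
  have h2' : (((PadicInt.unitCoeff hz0)⁻¹ : ℤ_[p]ˣ) : ℤ_[p]) * z = (p : ℤ_[p]) ^ z.valuation := by
    rw [Units.inv_mul_eq_iff_eq_mul]; exact this
  rw [h2'] at h2
  have h3 : ((p : ℤ_[p]) ^ z.valuation) = (p ^ z.valuation) • (1 : ℤ_[p]) := by simp
  rw [h3, AddChar.map_nsmul_eq_pow] at h2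
  exact h1 _ (pow_pos (Fact.out : p.Prime).pos _) h2

lemma tp (y : ℤ_[p]) : Filter.Tendsto (((p : ℤ_[p]) * y) ^ ·) Filter.atTop (nhds 0) := by
  apply tendsto_pow_atTop_nhds_zero_of_norm_lt_one
  rw [norm_mul]
  calc ‖(p : ℤ_[p])‖ * ‖y‖ ≤ ‖(p : ℤ_[p])‖ * 1 := by
        gcongr; exact PadicInt.norm_le_one y
    _ < 1 := by rw [mul_one, PadicInt.norm_p]; exact inv_lt_one_of_one_lt₀ (by exact_mod_cast (Fact.out : p.Prime).one_lt)

/-- the character with value `1 + p y` at `1`. -/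
noncomputable def ka (y : ℤ_[p]) : AddChar ℤ_[p] ℤ_[p] :=
  PadicInt.addChar_of_value_at_one _ (tp y)

lemma ka_one (y : ℤ_[p]) : ka y 1 = 1 + p * y := PadicInt.addChar_of_value_at_one_def (tp y)
lemma ka_cont (y : ℤ_[p]) : Continuous (ka y) := PadicInt.continuous_addChar_of_value_at_one (tp y)

lemma inv_apply' (κ : AddChar ℤ_[p] ℤ_[p]) (s : ℤ_[p]) : (κ⁻¹) s = κ (-s) := rfl

/-- the diagonal characters -/
noncomputable def cc (M : ℕ) (y : ℤ_[p]) : Fin (M + 3) → AddChar ℤ_[p] ℤ_[p] :=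
  Fin.cons (ka 1) (Fin.cons (ka y) (Fin.cons ((ka 1)⁻¹ * (ka y)⁻¹) (fun _ => 1)))

lemma cc_cont (M : ℕ) (y : ℤ_[p]) (i) : Continuous (cc M y i) := by
  have h1 := ka_cont (1 : ℤ_[p])
  have h2 := ka_cont y
  have h3 : Continuous (⇑((ka 1)⁻¹ * (ka y)⁻¹ : AddChar ℤ_[p] ℤ_[p])) := by
    have : ⇑((ka 1)⁻¹ * (ka y)⁻¹ : AddChar ℤ_[p] ℤ_[p]) = fun s => ka 1 (-s) * ka y (-s) := by
      ext s; simp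
    rw [this]; fun_prop
  refine Fin.cases ?_ (fun i => ?_) i
  · simpa [cc] using h1
  refine Fin.cases ?_ (fun i => ?_) i
  · simpa [cc] using h2
  refine Fin.cases ?_ (fun i => ?_) i
  · exact h3
  simp [cc]; exact continuous_const

lemma cc_prod (M : ℕ) (y s : ℤ_[p]) : ∏ i, cc M y i s = 1 := by
  simp only [cc, Fin.prod_univ_succ, Fin.cons_zero, Fin.cons_succ]
  simp only [AddChar.mul_apply, inv_apply', AddChar.one_apply, Finset.prod_const_one, mul_one]
  have e1 : ka 1 s * ka 1 (-s) = 1 := by rw [← AddChar.map_add_eq_mul]; simp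
  have e2 : ka y s * ka y (-s) = 1 := by rw [← AddChar.map_add_eq_mul]; simp
  linear_combination (ka y s * ka y (-s)) * e1 + e2

/-- the one-parameter subgroup -/
noncomputable def opg (M : ℕ) (y : ℤ_[p]) :
    Multiplicative ℤ_[p] →* Matrix.SpecialLinearGroup (Fin (M + 3)) ℤ_[p] where
  toFun s := ⟨Matrix.diagonal (fun i => cc M y i s.toAdd), by
    rw [Matrix.det_diagonal]; exact cc_prod M y _⟩
  map_one' := by
    apply Subtype.ext; simp
  map_mul' s t := by
    apply Subtype.ext
    change Matrix.diagonal _ = Matrix.diagonal _ * Matrix.diagonal _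
    rw [Matrix.diagonal_mul_diagonal]
    simp [AddChar.map_add_eq_mul]

lemma opg_cont (M : ℕ) (y : ℤ_[p]) : Continuous (opg M y) := by
  apply Continuous.subtype_mk
  apply Continuous.matrix_diagonal
  apply continuous_pi
  intro i
  exact (cc_cont M y i).comp continuous_toAdd

lemma sl_t2 (N : ℕ) : T2Space (Matrix.SpecialLinearGroup (Fin N) ℤ_[p]) :=
  inferInstanceAs (T2Space {A : Matrix (Fin N) (Fin N) ℤ_[p] // A.det = 1})

/-- the closed subgroup -/
noncomputable def HH (M : ℕ) (y : ℤ_[p]) : CS p (M + 3) :=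
  ⟨(opg M y).range, by
    have := sl_t2 (p := p) (M + 3)
    have : CompactSpace (Multiplicative ℤ_[p]) := inferInstanceAs (CompactSpace ℤ_[p])
    exact (isCompact_range (opg_cont M y)).isClosed⟩

lemma key_fiber (M : ℕ) (y0 : ℤ_[p]) (h0 : ∀ n : ℕ, 0 < n → (1 + (p : ℤ_[p]) * y0) ^ n ≠ 1)
    (h1 : ∀ n : ℕ, 0 < n → ((1 + (p : ℤ_[p])) * (1 + p * y0)) ^ n ≠ 1) :
    {y : ℤ_[p] | rel p (M + 3) (HH M y) (HH M y0)}.Countable := by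
  have hp1 : ∀ n : ℕ, 0 < n → (1 + (p : ℤ_[p])) ^ n ≠ 1 := by
    intro n hn h
    have : (((1 + p) ^ n : ℕ) : ℤ_[p]) = ((1 : ℕ) : ℤ_[p]) := by push_cast; exact h
    have := Nat.cast_injective this
    rw [Nat.pow_eq_one] at this
    have := (Fact.out : p.Prime).pos
    omega
  have inj : ∀ j : Fin (M + 3), {s | cc M y0 j s = 1 + (p : ℤ_[p])}.Subsingleton := by
    intro j
    have : Function.Injective (cc M y0 j) → {s | cc M y0 j s = 1 + (p : ℤ_[p])}.Subsingleton :=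
      fun hi a ha b hb => hi (ha.trans hb.symm)
    refine Fin.cases ?_ (fun j => ?_) j
    · intro a ha b hb
      refine char_inj (ka 1) (ka_cont 1) ?_ (ha.trans hb.symm)
      simpa [ka_one] using hp1
    refine Fin.cases ?_ (fun j => ?_) j
    · intro a ha b hb
      refine char_inj (ka y0) (ka_cont y0) ?_ (ha.trans hb.symm)
      simpa [ka_one] using h0
    refine Fin.cases ?_ (fun j => ?_) j
    · intro a ha b hb
      have hc := cc_cont M y0 (Fin.succ (Fin.succ 0))
      refine char_inj ((ka 1)⁻¹ * (ka y0)⁻¹) hc ?_ (ha.trans hb.symm)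
      intro n hn h
      apply h1 n hn
      have e1 : (ka 1) (1 : ℤ_[p]) * ka 1 (-1) = 1 := by rw [← AddChar.map_add_eq_mul]; simp
      have e2 : ka y0 (1 : ℤ_[p]) * ka y0 (-1) = 1 := by rw [← AddChar.map_add_eq_mul]; simp
      simp only [AddChar.mul_apply, inv_apply'] at h
      rw [ka_one, mul_one] at e1
      rw [ka_one] at e2
      calc ((1 + (p : ℤ_[p])) * (1 + (p : ℤ_[p]) * y0)) ^ n = ((1 + (p : ℤ_[p])) * (1 + (p : ℤ_[p]) * y0)) ^ n * (ka 1 (-1) * ka y0 (-1)) ^ n := by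
            rw [h, mul_one]
        _ = ((1 + (p : ℤ_[p])) * ka 1 (-1) * ((1 + (p : ℤ_[p]) * y0) * ka y0 (-1))) ^ n := by
            rw [← mul_pow]; ring
        _ = 1 := by rw [e1, e2]; simp
    · intro a ha
      exfalso
      have : (1 : ℤ_[p]) = 1 + p := ha
      exact hp1 1 one_pos (by rw [pow_one]; exact this.symm)
  have hT : (⋃ j, ⋃ j', (cc M y0 j') '' {s | cc M y0 j s = 1 + (p : ℤ_[p])}).Countable := by
    refine Set.countable_iUnion fun j => Set.countable_iUnion fun j' => ?_
    exact (inj j).countable.image _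
  have hinj : Function.Injective (fun y : ℤ_[p] => 1 + (p : ℤ_[p]) * y) := by
    intro a b hab
    have : (p : ℤ_[p]) ≠ 0 := by exact_mod_cast (Fact.out : p.Prime).ne_zero
    simpa [this] using hab
  refine (hT.preimage hinj).mono ?_
  rintro y ⟨g, hg⟩
  have hm : opg M y (Multiplicative.ofAdd 1) ∈ (HH M y).1 := ⟨_, rfl⟩
  have hm2 := Subgroup.mem_map_of_mem (MulAut.conj g).toMonoidHom hm
  rw [hg] at hm2
  obtain ⟨s, hs⟩ := hm2
  have hs' : opg M y0 s * g = g * opg M y (Multiplicative.ofAdd 1) := by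
    rw [hs]; simp
  have key : ∀ i, ∃ j, cc M y i 1 = cc M y0 j s.toAdd := by
    intro i
    have hne : ∃ j, g.1 j i ≠ 0 := by
      by_contra! hcon
      have := Matrix.det_eq_zero_of_column_eq_zero i hcon
      rw [g.2] at this
      exact one_ne_zero this
    obtain ⟨j, hj⟩ := hne
    refine ⟨j, ?_⟩
    have := congrArg (fun A => A.1 j i) hs'
    have h4 : cc M y0 j s.toAdd * g.1 j i = g.1 j i * cc M y i 1 := by
      have h5 := congrArg (fun A : Matrix.SpecialLinearGroup (Fin (M+3)) ℤ_[p] => A.1) hs'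
      have h6 := congrFun (congrFun h5 j) i
      change (Matrix.diagonal (fun i => cc M y0 i s.toAdd) * g.1 : Matrix _ _ ℤ_[p]) j i
        = (g.1 * Matrix.diagonal (fun i => cc M y i 1) : Matrix _ _ ℤ_[p]) j i at h6
      rw [Matrix.diagonal_mul, Matrix.mul_diagonal] at h6
      exact h6
    apply mul_left_cancel₀ hj
    rw [← h4, mul_comm]
  obtain ⟨j, hj⟩ := key 0
  obtain ⟨j', hj'⟩ := key 1
  simp only [Set.mem_preimage, Set.mem_iUnion]
  refine ⟨j, j', s.toAdd, ?_, ?_⟩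
  · change _ = _
    rw [← hj]; change ka 1 1 = _; rw [ka_one, mul_one]
  · rw [← hj']; change ka y 1 = _; rw [ka_one]

lemma zp_unc : ¬ (Set.univ : Set ℤ_[p]).Countable := by
  intro h
  have h2 := h.image (fun x : ℤ_[p] => (x : ℚ_[p]))
  have : (fun x : ℤ_[p] => (x : ℚ_[p])) '' Set.univ = Metric.closedBall 0 1 := by
    ext x
    simp only [Set.image_univ, Set.mem_range, mem_closedBall_zero_iff]
    exact ⟨fun ⟨y, hy⟩ => hy ▸ y.2, fun hx => ⟨⟨x, hx⟩, rfl⟩⟩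
  rw [this] at h2
  have ho : IsOpen (Metric.closedBall (0 : ℚ_[p]) 1) :=
    IsUltrametricDist.isOpen_closedBall _ one_ne_zero
  have := continuum_le_cardinal_of_isOpen ℚ_[p] ho ⟨0, by simp⟩
  have h3 := h2.le_aleph0
  exact absurd (this.trans h3) (not_le.mpr Cardinal.aleph0_lt_continuum)

open Classical in
lemma not_countable_ge3 (M : ℕ) : ¬ Countable (Quot (rel p (M + 3))) := by
  intro hc
  have hp0 : (p : ℤ_[p]) ≠ 0 := by exact_mod_cast (Fact.out : p.Prime).ne_zero
  have htor : ({x : ℤ_[p] | ∃ n : ℕ, 0 < n ∧ x ^ n = 1}).Countable := by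
    have : {x : ℤ_[p] | ∃ n : ℕ, 0 < n ∧ x ^ n = 1} ⊆
      ⋃ n : ℕ, ((Polynomial.nthRoots n (1 : ℤ_[p])).toFinset : Set ℤ_[p]) := by
      rintro x ⟨n, hn, hx⟩
      simp only [Set.mem_iUnion]
      exact ⟨n, by simp [Polynomial.mem_nthRoots hn, hx]⟩
    exact (Set.countable_iUnion fun n => Finset.countable_toSet _).mono this
  have i1 : Function.Injective (fun y : ℤ_[p] => 1 + (p : ℤ_[p]) * y) := by
    intro a b hab
    simpa [hp0] using hab
  have hp1 : (1 + (p : ℤ_[p])) ≠ 0 := by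
    have : ((1 + p : ℕ) : ℤ_[p]) ≠ 0 := by
      rw [Nat.cast_ne_zero]; omega
    exact_mod_cast this
  have i2 : Function.Injective (fun y : ℤ_[p] => (1 + (p : ℤ_[p])) * (1 + (p : ℤ_[p]) * y)) := by
    intro a b hab
    exact i1 (mul_left_cancel₀ hp1 hab)
  have hb := (htor.preimage i1).union (htor.preimage i2)
  set B := ((fun y : ℤ_[p] => 1 + (p : ℤ_[p]) * y) ⁻¹' {x : ℤ_[p] | ∃ n : ℕ, 0 < n ∧ x ^ n = 1}) ∪
    ((fun y : ℤ_[p] => (1 + (p : ℤ_[p])) * (1 + (p : ℤ_[p]) * y)) ⁻¹'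
      {x : ℤ_[p] | ∃ n : ℕ, 0 < n ∧ x ^ n = 1}) with hB
  have hcov : Bᶜ ⊆ ⋃ q : Quot (rel p (M + 3)), {y | y ∈ Bᶜ ∧ Quot.mk (rel p (M + 3)) (HH M y) = q} := by
    intro y hy
    simp only [Set.mem_iUnion]
    exact ⟨_, hy, rfl⟩
  have hcc : (Bᶜ).Countable := by
    refine (Set.countable_iUnion fun q => ?_).mono hcov
    by_cases hq : ∃ y0, y0 ∈ Bᶜ ∧ Quot.mk (rel p (M + 3)) (HH M y0) = q
    · obtain ⟨y0, hy0, rfl⟩ := hq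
      refine (key_fiber M y0 ?_ ?_).mono ?_
      · intro n hn h
        exact hy0 (Or.inl ⟨n, hn, h⟩)
      · intro n hn h
        exact hy0 (Or.inr ⟨n, hn, h⟩)
      · rintro y ⟨_, hy⟩
        exact rel_of_mk_eq hy
    · push Not at hq
      convert Set.countable_empty
      ext y
      simp only [Set.mem_ofPred_eq, Set.mem_empty_iff_false, iff_false, not_and]
      exact hq y
  apply zp_unc (p := p)
  rw [← Set.union_compl_self B]
  exact hb.union hcc

end SLC

namespace SLC
open Matrix

variable {p : ℕ} [Fact p.Prime]

/-- 2 by 2 matrices -/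
abbrev M2 (p : ℕ) [Fact p.Prime] := Matrix (Fin 2) (Fin 2) ℤ_[p]
/-- SL2 -/
abbrev G2 (p : ℕ) [Fact p.Prime] := Matrix.SpecialLinearGroup (Fin 2) ℤ_[p]

lemma pne : (p : ℤ_[p]) ≠ 0 := by exact_mod_cast (Fact.out : p.Prime).ne_zero
lemma ppne (n : ℕ) : (p : ℤ_[p]) ^ n ≠ 0 := pow_ne_zero _ pne

lemma eq_zero_of_dvd {x : ℤ_[p]} (h : ∀ r : ℕ, ∃ c, x = (p : ℤ_[p]) ^ r * c) : x = 0 := by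
  by_contra hx
  obtain ⟨c, hc⟩ := h (x.valuation + 1)
  have h1 : (p : ℤ_[p]) ^ (x.valuation + 1) ∣ x := ⟨c, hc⟩
  have h2 := (PadicInt.mem_span_pow_iff_le_valuation x hx (x.valuation + 1)).mp
    (Ideal.mem_span_singleton.mpr h1)
  omega

lemma dvd_pow_of_ne {x : ℤ_[p]} (hx : x ≠ 0) : ∃ n : ℕ, ∃ c, (p : ℤ_[p]) ^ n = x * c := by
  refine ⟨x.valuation, (((PadicInt.unitCoeff hx)⁻¹ : ℤ_[p]ˣ) : ℤ_[p]), ?_⟩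
  have := PadicInt.unitCoeff_spec hx
  rw [mul_comm, eq_comm, Units.inv_mul_eq_iff_eq_mul]; exact this

lemma nat_approx (s : ℤ_[p]) (r : ℕ) : ∃ n : ℕ, ∃ t, s = n + (p : ℤ_[p]) ^ r * t := by
  refine ⟨s.appr r, ?_⟩
  have := PadicInt.appr_spec r s
  rw [Ideal.mem_span_singleton] at this
  obtain ⟨t, ht⟩ := this
  exact ⟨t, by linear_combination ht⟩

/-- reduction mod `p ^ K` -/
noncomputable def red (K : ℕ) : G2 p →* Matrix.SpecialLinearGroup (Fin 2) (ZMod (p ^ K)) :=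
  Matrix.SpecialLinearGroup.map (PadicInt.toZModPow K)

/-- congruence subgroups -/
noncomputable def Gam (K : ℕ) : Subgroup (G2 p) := (red K).ker

lemma toZ_eq_zero {K : ℕ} {x : ℤ_[p]} : PadicInt.toZModPow K x = 0 ↔ ∃ c, x = (p : ℤ_[p]) ^ K * c := by
  rw [← RingHom.mem_ker, PadicInt.ker_toZModPow, Ideal.mem_span_singleton]; rfl

lemma toZ_eq {K : ℕ} {x y : ℤ_[p]} :
    PadicInt.toZModPow K x = PadicInt.toZModPow K y ↔ ∃ c, x = y + (p : ℤ_[p]) ^ K * c := by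
  rw [← sub_eq_zero, ← map_sub, toZ_eq_zero]
  exact ⟨fun ⟨c, h⟩ => ⟨c, by linear_combination h⟩, fun ⟨c, h⟩ => ⟨c, by linear_combination h⟩⟩

lemma matmap_eq {K : ℕ} {A B : M2 p} :
    A.map (PadicInt.toZModPow K) = B.map (PadicInt.toZModPow K) ↔
      ∃ C : M2 p, A = B + (p : ℤ_[p]) ^ K • C := by
  constructor
  · intro h
    have : ∀ i j, ∃ c, A i j = B i j + (p : ℤ_[p]) ^ K * c := fun i j =>
      toZ_eq.mp (congrFun (congrFun h i) j)
    choose C hC using this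
    exact ⟨Matrix.of C, by ext i j; simp [hC]⟩
  · rintro ⟨C, h⟩
    ext i j
    exact toZ_eq.mpr ⟨C i j, by rw [h]; simp⟩

lemma red_eq {K : ℕ} {g h : G2 p} :
    red K g = red K h ↔ ∃ C : M2 p, (g : M2 p) = h + (p : ℤ_[p]) ^ K • C := by
  exact ⟨fun e => matmap_eq.mp (congrArg (fun A : Matrix.SpecialLinearGroup (Fin 2) (ZMod (p ^ K)) =>
    (A : Matrix (Fin 2) (Fin 2) (ZMod (p ^ K)))) e), fun e => Subtype.ext (matmap_eq.mpr e)⟩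

lemma mem_Gam {K : ℕ} {g : G2 p} :
    g ∈ Gam K ↔ ∃ C : M2 p, (g : M2 p) = 1 + (p : ℤ_[p]) ^ K • C := by
  rw [Gam, MonoidHom.mem_ker, ← map_one (red K), red_eq]; simp

lemma mem_of_closed {H : Subgroup (G2 p)} (hH : IsClosed (H : Set (G2 p))) {g : G2 p}
    (h : ∀ n : ℕ, ∃ h ∈ H, red n h = red n g) : g ∈ H := by
  choose u hu hr using h
  have : Filter.Tendsto u Filter.atTop (nhds g) := by
    refine tendsto_subtype_rng.mpr ?_
    refine tendsto_pi_nhds.mpr fun i => tendsto_pi_nhds.mpr fun j => ?_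
    rw [tendsto_iff_norm_sub_tendsto_zero]
    have hp : ((p : ℝ)⁻¹) < 1 :=
      inv_lt_one_of_one_lt₀ (by exact_mod_cast (Fact.out : p.Prime).one_lt)
    refine squeeze_zero (fun _ => norm_nonneg _) (fun n => ?_)
      (tendsto_pow_atTop_nhds_zero_of_lt_one (r := (p : ℝ)⁻¹) (by positivity) hp)
    obtain ⟨C, hC⟩ := red_eq.mp (hr n)
    have e : (u n).1 i j - g.1 i j = (p : ℤ_[p]) ^ n * C i j := by
      have := congrFun (congrFun hC i) j
      simp at this
      rw [this]; ring
    change ‖(u n).1 i j - g.1 i j‖ ≤ _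
    rw [e, norm_mul, norm_pow, PadicInt.norm_p]
    have := PadicInt.norm_le_one (C i j)
    have h0 : 0 ≤ ((p : ℝ)⁻¹) ^ n := by positivity
    nlinarith
  exact hH.mem_of_tendsto this (Filter.Eventually.of_forall hu)

lemma approx_lemma {H C : Subgroup (G2 p)} (hH : IsClosed (H : Set (G2 p))) (K : ℕ)
    (h : ∀ k, K ≤ k → ∀ g ∈ C, g ∈ Gam k → ∃ h ∈ H, h ∈ C ∧ red (k + 1) h = red (k + 1) g) :
    C ⊓ Gam K ≤ H := by
  rintro g ⟨hgC, hgK⟩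
  apply mem_of_closed hH
  have : ∀ j, ∃ h ∈ H, h ∈ C ∧ red (K + j) h = red (K + j) g := by
    intro j
    induction j with
    | zero => exact ⟨1, one_mem _, one_mem _, by rw [map_one]; exact ((MonoidHom.mem_ker).mp hgK).symm⟩
    | succ j ih =>
      obtain ⟨h1, hh, hc, hr⟩ := ih
      obtain ⟨h2, hh2, hc2, hr2⟩ := h (K + j) (by omega) (h1⁻¹ * g)
        (mul_mem (inv_mem hc) hgC) (by
          rw [Gam, MonoidHom.mem_ker, map_mul, map_inv, hr]; simp)
      refine ⟨h1 * h2, mul_mem hh hh2, mul_mem hc hc2, ?_⟩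
      rw [← add_assoc, map_mul, hr2, ← map_mul]; simp
  intro n
  obtain ⟨h, hh, -, hr⟩ := this n
  refine ⟨h, hh, ?_⟩
  obtain ⟨C, hC⟩ := red_eq.mp hr
  exact red_eq.mpr ⟨(p : ℤ_[p]) ^ K • C, by rw [hC, smul_smul, ← pow_add, add_comm n]⟩

/-- subgroups of `M` open in `M` -/
def Fx (M : Subgroup (G2 p)) : Set (CS p 2) := {H | H.1 ≤ M ∧ ∃ K, M ⊓ Gam K ≤ H.1}

lemma fix_countable (M : Subgroup (G2 p)) : (Fx M).Countable := by
  have : Fx M ⊆ ⋃ K : ℕ, {H : CS p 2 | H.1 ≤ M ∧ M ⊓ Gam K ≤ H.1} := by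
    rintro H ⟨h1, K, h2⟩
    exact Set.mem_iUnion.mpr ⟨K, h1, h2⟩
  refine (Set.countable_iUnion fun K => ?_).mono this
  have : NeZero (p ^ K) := ⟨pow_ne_zero _ (Fact.out : p.Prime).ne_zero⟩
  have : Finite (Matrix.SpecialLinearGroup (Fin 2) (ZMod (p ^ K))) := inferInstance
  refine Set.Finite.countable ?_
  refine Set.Finite.of_finite_image (f := fun H : CS p 2 => H.1.map (red K)) (Set.toFinite _) ?_
  have key : ∀ H H' : CS p 2, H.1 ≤ M → H'.1 ≤ M → M ⊓ Gam K ≤ H'.1 →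
      H.1.map (red K) = H'.1.map (red K) → H.1 ≤ H'.1 := by
    intro H H' h1 h2 h3 he x hx
    have : red K x ∈ H'.1.map (red K) := he ▸ Subgroup.mem_map_of_mem _ hx
    obtain ⟨y, hy, hyx⟩ := this
    have h4 : y⁻¹ * x ∈ H'.1 := h3 ⟨M.mul_mem (M.inv_mem (h2 hy)) (h1 hx), by
      change _ ∈ (red K).ker
      rw [MonoidHom.mem_ker, map_mul, map_inv, hyx]; simp⟩
    simpa using mul_mem hy h4
  rintro H ⟨h1, h2⟩ H' ⟨h1', h2'⟩ he
  exact Subtype.ext (le_antisymm (key H H' h1 h1' h2' he) (key H' H h1' h1 h2 he.symm))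

/-- approximate tangent vectors -/
def Lk (H : Subgroup (G2 p)) (k r : ℕ) : Set (M2 p) :=
  {X | ∃ h ∈ H, ∃ C : M2 p, (h : M2 p) = 1 + (p : ℤ_[p]) ^ k • (X + (p : ℤ_[p]) ^ r • C)}

lemma Lk_add {H : Subgroup (G2 p)} {k r : ℕ} (hr : r ≤ k) {X Y : M2 p}
    (hX : X ∈ Lk H k r) (hY : Y ∈ Lk H k r) : X + Y ∈ Lk H k r := by
  obtain ⟨h, hh, C, hC⟩ := hX
  obtain ⟨h', hh', C', hC'⟩ := hY
  obtain ⟨t, rfl⟩ := Nat.exists_eq_add_of_le hr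
  refine ⟨h * h', mul_mem hh hh', C + C' + (p : ℤ_[p]) ^ t •
    ((X + (p : ℤ_[p]) ^ r • C) * (Y + (p : ℤ_[p]) ^ r • C')), ?_⟩
  rw [Matrix.SpecialLinearGroup.coe_mul, hC, hC']
  generalize hA : X + (p : ℤ_[p]) ^ r • C = A
  generalize hB : Y + (p : ℤ_[p]) ^ r • C' = B
  have e : X + Y + (p : ℤ_[p]) ^ r • (C + C' + (p : ℤ_[p]) ^ t • (A * B)) =
    A + B + (p : ℤ_[p]) ^ (r + t) • (A * B) := by
    rw [← hA, ← hB]; simp only [smul_add, smul_smul, pow_add]; abel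
  rw [e]
  simp only [add_mul, mul_add, smul_mul_assoc, mul_smul_comm, mul_one, one_mul, smul_add]
  abel

lemma Lk_smul {H : Subgroup (G2 p)} {k r : ℕ} (hr : r ≤ k) {X : M2 p}
    (hX : X ∈ Lk H k r) (s : ℤ_[p]) : s • X ∈ Lk H k r := by
  have hn : ∀ n : ℕ, (n : ℤ_[p]) • X ∈ Lk H k r := by
    intro n
    induction n with
    | zero => exact ⟨1, one_mem _, 0, by simp⟩
    | succ n ih =>
      rw [Nat.cast_succ, add_smul, one_smul]
      exact Lk_add hr ih hX
  obtain ⟨n, t, rfl⟩ := nat_approx s r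
  obtain ⟨h, hh, C, hC⟩ := hn n
  refine ⟨h, hh, C - t • X, ?_⟩
  rw [hC]
  congr 2
  module

/-- the tangent space -/
def LL (H : Subgroup (G2 p)) : Set (M2 p) := {X | ∀ r, ∃ K, ∀ k, K ≤ k → X ∈ Lk H k r}

lemma LL_add {H : Subgroup (G2 p)} {X Y : M2 p} (hX : X ∈ LL H) (hY : Y ∈ LL H) :
    X + Y ∈ LL H := by
  intro r
  obtain ⟨K, hK⟩ := hX r
  obtain ⟨K', hK'⟩ := hY r
  exact ⟨r + K + K', fun k hk => Lk_add (by omega) (hK k (by omega)) (hK' k (by omega))⟩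

lemma LL_smul {H : Subgroup (G2 p)} {X : M2 p} (hX : X ∈ LL H) (s : ℤ_[p]) : s • X ∈ LL H := by
  intro r
  obtain ⟨K, hK⟩ := hX r
  exact ⟨r + K, fun k hk => Lk_smul (by omega) (hK k (by omega)) s⟩

lemma LL_sub {H : Subgroup (G2 p)} {X Y : M2 p} (hX : X ∈ LL H) (hY : Y ∈ LL H) :
    X - Y ∈ LL H := by
  have := LL_add hX (LL_smul hY (-1))
  simpa [sub_eq_add_neg] using this

lemma LL_satp {H : Subgroup (G2 p)} {X : M2 p} (hX : (p : ℤ_[p]) • X ∈ LL H) : X ∈ LL H := by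
  intro r
  obtain ⟨K, hK⟩ := hX (r + 1)
  refine ⟨K + 1, fun k hk => ?_⟩
  obtain ⟨k, rfl⟩ : ∃ k', k = k' + 1 := ⟨k - 1, by omega⟩
  obtain ⟨h, hh, C, hC⟩ := hK k (by omega)
  refine ⟨h, hh, C, ?_⟩
  rw [hC]
  congr 1
  module

lemma LL_sat {H : Subgroup (G2 p)} {X : M2 p} {c : ℤ_[p]} (hc : c ≠ 0) (hX : c • X ∈ LL H) :
    X ∈ LL H := by
  obtain ⟨n, d, hd⟩ := dvd_pow_of_ne hc
  have h1 : (p : ℤ_[p]) ^ n • X ∈ LL H := by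
    rw [hd, mul_comm, mul_smul]; exact LL_smul hX d
  clear hd
  induction n with
  | zero => simpa using h1
  | succ n ih =>
    apply ih
    apply LL_satp
    rw [smul_smul, ← pow_succ']; exact h1

lemma coe_mul_inv (g : G2 p) : (g : M2 p) * ((g⁻¹ : G2 p) : M2 p) = 1 := by
  rw [← Matrix.SpecialLinearGroup.coe_mul]; simp

lemma coe_inv_mul (g : G2 p) : ((g⁻¹ : G2 p) : M2 p) * (g : M2 p) = 1 := by
  rw [← Matrix.SpecialLinearGroup.coe_mul]; simp

lemma LL_conj {H : Subgroup (G2 p)} {X : M2 p} (hX : X ∈ LL H) {g : G2 p} (hg : g ∈ H) :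
    (g : M2 p) * X * ((g⁻¹ : G2 p) : M2 p) ∈ LL H := by
  intro r
  obtain ⟨K, hK⟩ := hX r
  refine ⟨K, fun k hk => ?_⟩
  obtain ⟨h, hh, C, hC⟩ := hK k hk
  refine ⟨g * h * g⁻¹, mul_mem (mul_mem hg hh) (inv_mem hg),
    (g : M2 p) * C * ((g⁻¹ : G2 p) : M2 p), ?_⟩
  rw [Matrix.SpecialLinearGroup.coe_mul, Matrix.SpecialLinearGroup.coe_mul, hC]
  simp only [mul_add, add_mul, smul_mul_assoc, mul_smul_comm, smul_add, mul_one, coe_mul_inv]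

lemma det_one_add (k : ℕ) (A : M2 p) (h : (1 + (p : ℤ_[p]) ^ k • A).det = 1) :
    A.trace = - (p : ℤ_[p]) ^ k * A.det := by
  rw [Matrix.det_fin_two] at h
  simp at h
  rw [Matrix.trace_fin_two, Matrix.det_fin_two]
  apply mul_left_cancel₀ (ppne k)
  linear_combination h

lemma LL_trace {H : Subgroup (G2 p)} {X : M2 p} (hX : X ∈ LL H) : X.trace = 0 := by
  apply eq_zero_of_dvd
  intro r
  obtain ⟨K, hK⟩ := hX r
  obtain ⟨h, hh, C, hC⟩ := hK (K + r) (by omega)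
  have h1 := h.2
  change (h : M2 p).det = 1 at h1
  rw [hC] at h1
  have := det_one_add _ _ h1
  rw [Matrix.trace_add, Matrix.trace_smul, smul_eq_mul] at this
  refine ⟨- (p : ℤ_[p]) ^ K * (X + (p : ℤ_[p]) ^ r • C).det - C.trace, ?_⟩
  rw [pow_add] at this
  linear_combination this

lemma LL_upper {H : Subgroup (G2 p)} (hB : ∀ h ∈ H, (h : M2 p) 1 0 = 0) {X : M2 p}
    (hX : X ∈ LL H) : X 1 0 = 0 := by
  apply eq_zero_of_dvd
  intro r
  obtain ⟨K, hK⟩ := hX r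
  obtain ⟨h, hh, C, hC⟩ := hK K le_rfl
  have h1 := hB h hh
  rw [hC] at h1
  simp at h1
  exact ⟨- C 1 0, mul_left_cancel₀ (ppne K) (by linear_combination h1)⟩

end SLC

namespace SLC
open Matrix

variable {p : ℕ} [Fact p.Prime]

lemma not_unit_p_mul (c : ℤ_[p]) : ¬ IsUnit ((p : ℤ_[p]) * c) := by
  intro h
  have := isUnit_of_mul_isUnit_left h
  exact PadicInt.prime_p.not_isUnit this

lemma prim (A : M2 p) (hA : A ≠ 0) :
    ∃ (k : ℕ) (Y : M2 p), A = (p : ℤ_[p]) ^ k • Y ∧ ∃ i j, IsUnit (Y i j) := by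
  obtain ⟨⟨i, j⟩, hij⟩ := Finite.exists_max (fun q : Fin 2 × Fin 2 => ‖A q.1 q.2‖)
  have hne : A i j ≠ 0 := by
    intro h0
    apply hA
    ext i' j'
    have := hij (i', j')
    simp only [h0, norm_zero] at this
    simpa using norm_le_zero_iff.mp this
  set k := (A i j).valuation with hk
  have hall : ∀ i' j', ∃ c, A i' j' = (p : ℤ_[p]) ^ k * c := by
    intro i' j'
    have h1 := hij (i', j')
    simp only at h1
    rw [PadicInt.norm_eq_zpow_neg_valuation hne, ← hk, PadicInt.norm_le_pow_iff_mem_span_pow,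
      Ideal.mem_span_singleton] at h1
    exact h1
  choose Y hY using hall
  refine ⟨k, Matrix.of Y, by ext i' j'; simp [hY], i, j, ?_⟩
  have h2 := PadicInt.unitCoeff_spec hne
  have h3 : Y i j = PadicInt.unitCoeff hne := by
    apply mul_left_cancel₀ (ppne (p := p) k)
    rw [← hY, mul_comm, hk]
    exact h2
  simp [h3]

lemma lim1 (f : ℕ → ℤ_[p]) (h : ∀ j, ∃ c, f (j + 1) = f j + (p : ℤ_[p]) ^ j * c) :
    ∃ x, ∀ j, ∃ c, x = f j + (p : ℤ_[p]) ^ j * c := by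
  have hI : IsLocalRing.maximalIdeal ℤ_[p] = Ideal.span {(p : ℤ_[p])} :=
    PadicInt.maximalIdeal_eq_span_p
  have hmem : ∀ (j : ℕ) (x y : ℤ_[p]),
      x ≡ y [SMOD ((IsLocalRing.maximalIdeal ℤ_[p]) ^ j • ⊤ : Submodule ℤ_[p] ℤ_[p])] ↔
      ∃ c, y = x + (p : ℤ_[p]) ^ j * c := by
    intro j x y
    rw [hI, Ideal.span_singleton_pow, SModEq.comm, SModEq.sub_mem, smul_eq_mul, Ideal.mul_top,
      Ideal.mem_span_singleton]
    exact ⟨fun ⟨c, h⟩ => ⟨c, by linear_combination h⟩, fun ⟨c, h⟩ => ⟨c, by linear_combination h⟩⟩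
  have hpre : IsPrecomplete (IsLocalRing.maximalIdeal ℤ_[p]) ℤ_[p] := inferInstance
  obtain ⟨x, hx⟩ := hpre.prec (f := f) (by
    intro m n hmn
    rw [hmem]
    induction n, hmn using Nat.le_induction with
    | base => exact ⟨0, by simp⟩
    | succ n hmn ih =>
      obtain ⟨c, hc⟩ := ih
      obtain ⟨d, hd⟩ := h n
      refine ⟨c + (p : ℤ_[p]) ^ (n - m) * d, ?_⟩
      have : (p : ℤ_[p]) ^ n = p ^ m * p ^ (n - m) := by rw [← pow_add]; congr 1; omega
      rw [hd, hc, this]; ring)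
  exact ⟨x, fun j => (hmem _ _ _).mp (hx j)⟩

lemma lim2 (f : ℕ → M2 p) (h : ∀ j, ∃ C : M2 p, f (j + 1) = f j + (p : ℤ_[p]) ^ j • C) :
    ∃ X : M2 p, ∀ j, ∃ C : M2 p, X = f j + (p : ℤ_[p]) ^ j • C := by
  have : ∀ a b, ∃ x, ∀ j, ∃ c, x = f j a b + (p : ℤ_[p]) ^ j * c := by
    intro a b
    refine lim1 (fun j => f j a b) fun j => ?_
    obtain ⟨C, hC⟩ := h j
    exact ⟨C a b, by simp [hC]⟩
  choose X hX using this
  refine ⟨Matrix.of X, fun j => ?_⟩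
  choose C hC using fun a b => hX a b j
  exact ⟨Matrix.of C, by ext a b; simp [← hC]⟩

lemma binom2 (x : M2 p) (n : ℕ) : ∃ S : M2 p, (1 + x) ^ n = 1 + (n : ℤ_[p]) • x + x * x * S := by
  induction n with
  | zero => exact ⟨0, by simp⟩
  | succ n ih =>
    obtain ⟨S, hS⟩ := ih
    refine ⟨(n : ℤ_[p]) • 1 + S * (1 + x), ?_⟩
    rw [pow_succ, hS]
    simp only [mul_add, add_mul, mul_one, one_mul, smul_mul_assoc, mul_smul_comm, Nat.cast_succ,
      add_smul, one_smul, mul_assoc]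
    abel

lemma smul_p_inj {n : ℕ} {A B : M2 p} (h : (p : ℤ_[p]) ^ n • A = (p : ℤ_[p]) ^ n • B) : A = B := by
  ext i j
  have := congrFun (congrFun h i) j
  simp only [Matrix.smul_apply, smul_eq_mul] at this
  exact mul_left_cancel₀ (ppne n) this

lemma pow_step {m : ℕ} (hm : 1 ≤ m) (Y : M2 p) : ∃ R : M2 p,
    (1 + (p : ℤ_[p]) ^ m • Y) ^ p = 1 + (p : ℤ_[p]) ^ (m + 1) • (Y + (p : ℤ_[p]) ^ (m - 1) • R) := by
  obtain ⟨S, hS⟩ := binom2 ((p : ℤ_[p]) ^ m • Y) p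
  refine ⟨Y * Y * S, ?_⟩
  rw [hS]
  have : (p : ℤ_[p]) ^ m * p ^ m = p ^ (m + 1) * p ^ (m - 1) := by
    rw [← pow_add, ← pow_add]; congr 1; omega
  simp only [smul_mul_assoc, mul_smul_comm, smul_add, smul_smul, this, pow_succ']
  abel

lemma mat_eq_of_dvd {A B : M2 p} (h : ∀ r : ℕ, ∃ C : M2 p, A = B + (p : ℤ_[p]) ^ r • C) : A = B := by
  ext i j
  rw [← sub_eq_zero]
  apply eq_zero_of_dvd
  intro r
  obtain ⟨C, hC⟩ := h r
  exact ⟨C i j, by rw [hC]; simp⟩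

lemma pow_lemma {H : Subgroup (G2 p)} {h : G2 p} (hH : h ∈ H) (h2 : h ∈ Gam 2) (h1 : h ≠ 1) :
    ∃ X ∈ LL H, X ≠ 0 ∧ X * (h : M2 p) = (h : M2 p) * X := by
  have hne : (h : M2 p) - 1 ≠ 0 := by
    intro e
    apply h1
    apply Subtype.ext
    exact sub_eq_zero.mp e
  obtain ⟨k, Y0, hY0, i0, j0, hu⟩ := prim _ hne
  have hk : 2 ≤ k := by
    by_contra hk
    obtain ⟨C, hC⟩ := mem_Gam.mp h2
    rw [hC, add_sub_cancel_left] at hY0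
    have e : (p : ℤ_[p]) ^ 2 = p ^ k * (p * p ^ (1 - k)) := by
      rw [← pow_succ', ← pow_add]; congr 1; omega
    rw [e, mul_smul] at hY0
    have := smul_p_inj hY0
    rw [← this] at hu
    simp only [Matrix.smul_apply, smul_eq_mul, mul_assoc] at hu
    exact not_unit_p_mul _ hu
  have hex : ∀ j : ℕ, ∃ Y : M2 p, (h : M2 p) ^ (p ^ j) = 1 + (p : ℤ_[p]) ^ (k + j) • Y := by
    intro j
    induction j with
    | zero => exact ⟨Y0, by simp [← hY0]⟩
    | succ j ih =>
      obtain ⟨Y, hY⟩ := ih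
      obtain ⟨R, hR⟩ := pow_step (m := k + j) (by omega) Y
      exact ⟨_, by rw [pow_succ p j, pow_mul, hY, hR, ← add_assoc]⟩
  choose Y hY using hex
  have hY00 : Y 0 = Y0 := by
    have := hY 0
    simp only [pow_zero, pow_one, add_zero] at this
    apply smul_p_inj (n := k)
    rw [← hY0, this]; simp
  have hstep : ∀ j, ∃ C : M2 p, Y (j + 1) = Y j + (p : ℤ_[p]) ^ (j + 1) • C := by
    intro j
    obtain ⟨R, hR⟩ := pow_step (m := k + j) (by omega) (Y j)
    refine ⟨(p : ℤ_[p]) ^ (k - 2) • R, ?_⟩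
    have h3 := hY (j + 1)
    rw [pow_succ p j, pow_mul, hY, hR, ← add_assoc] at h3
    have h4 := smul_p_inj (add_left_cancel h3)
    rw [← h4, smul_smul, ← pow_add]
    congr 3; omega
  obtain ⟨X, hX⟩ := lim2 Y (fun j => by
    obtain ⟨C, hC⟩ := hstep j
    exact ⟨(p : ℤ_[p]) • C, by rw [hC, smul_smul, pow_succ]⟩)
  refine ⟨X, ?_, ?_, ?_⟩
  · intro r
    refine ⟨k + r, fun k' hk' => ?_⟩
    obtain ⟨j, rfl⟩ : ∃ j, k' = k + j := ⟨k' - k, by omega⟩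
    obtain ⟨C, hC⟩ := hX j
    refine ⟨h ^ (p ^ j), pow_mem hH _, - ((p : ℤ_[p]) ^ (j - r) • C), ?_⟩
    rw [Matrix.SpecialLinearGroup.coe_pow, hY, hC]
    have : (p : ℤ_[p]) ^ j = p ^ r * p ^ (j - r) := by rw [← pow_add]; congr 1; omega
    rw [this, smul_neg, smul_smul, add_neg_cancel_right]
  · rintro rfl
    obtain ⟨C, hC⟩ := hX 1
    obtain ⟨D, hD⟩ := hstep 0
    rw [hD, hY00] at hC
    have := congrFun (congrFun hC i0) j0
    simp at this
    have e : Y0 i0 j0 = p * (- D i0 j0 - C i0 j0) := by linear_combination -this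
    rw [e] at hu
    exact not_unit_p_mul _ hu
  · apply mat_eq_of_dvd
    intro r
    obtain ⟨C, hC⟩ := hX r
    have hcomm : Y r * (h : M2 p) = (h : M2 p) * Y r := by
      have e : (h : M2 p) ^ (p ^ r) * h = h * (h : M2 p) ^ (p ^ r) := by
        rw [← pow_succ, ← pow_succ']
      rw [hY] at e
      simp only [add_mul, mul_add, one_mul, mul_one, smul_mul_assoc, mul_smul_comm] at e
      exact smul_p_inj (add_left_cancel e)
    refine ⟨C * h - h * C, ?_⟩
    rw [hC]
    simp only [add_mul, mul_add, smul_mul_assoc, mul_smul_comm, hcomm, smul_sub]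
    abel

lemma tl {X : M2 p} (h : X.trace = 0) : ∃ a b c, X = !![a, b; c, -a] := by
  rw [Matrix.trace_fin_two] at h
  refine ⟨X 0 0, X 0 1, X 1 0, ?_⟩
  have : X 1 1 = - X 0 0 := by linear_combination h
  rw [← this]; exact Matrix.eta_fin_two X

lemma cramer3 {X Y W V : M2 p} (hX : X.trace = 0) (hY : Y.trace = 0) (hW : W.trace = 0)
    (hV : V.trace = 0) :
    ((X * Y - Y * X) * W).trace • V = ((V * Y - Y * V) * W).trace • X +
      ((X * V - V * X) * W).trace • Y + ((X * Y - Y * X) * V).trace • W := by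
  obtain ⟨a, b, c, rfl⟩ := tl hX
  obtain ⟨a', b', c', rfl⟩ := tl hY
  obtain ⟨a'', b'', c'', rfl⟩ := tl hW
  obtain ⟨a3, b3, c3, rfl⟩ := tl hV
  ext i j
  fin_cases i <;> fin_cases j <;> simp [Matrix.trace_fin_two, Matrix.mul_apply, Fin.sum_univ_two] <;> ring

lemma triple {X Y V : M2 p} (hX : X.trace = 0) (hY : Y.trace = 0) (hV : V.trace = 0) :
    V * (X * Y - Y * X) - (X * Y - Y * X) * V = (-2 * (V * Y).trace) • X + (2 * (V * X).trace) • Y := by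
  obtain ⟨a, b, c, rfl⟩ := tl hX
  obtain ⟨a', b', c', rfl⟩ := tl hY
  obtain ⟨a3, b3, c3, rfl⟩ := tl hV
  ext i j
  fin_cases i <;> fin_cases j <;> simp [Matrix.trace_fin_two, Matrix.mul_apply, Fin.sum_univ_two] <;> ring

lemma prop_lemma {X Y : M2 p} (hX : X.trace = 0) (hY : Y.trace = 0)
    (hu : ∃ i j, IsUnit (X i j)) (hc : X * Y = Y * X) : ∃ s : ℤ_[p], Y = s • X := by
  obtain ⟨a, b, c, rfl⟩ := tl hX
  obtain ⟨a', b', c', rfl⟩ := tl hY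
  have two : (2 : ℤ_[p]) ≠ 0 := by exact_mod_cast (two_ne_zero : (2 : ℕ) ≠ 0)
  have h00 := congrFun (congrFun hc 0) 0
  have h01 := congrFun (congrFun hc 0) 1
  have h10 := congrFun (congrFun hc 1) 0
  simp at h00 h01 h10
  have e1 : b * c' = c * b' := by linear_combination h00
  have e2 : a * b' = b * a' := mul_left_cancel₀ two (by linear_combination h01)
  have e3 : a * c' = c * a' := mul_left_cancel₀ two (by linear_combination -h10)
  have fin : ∀ s, a' = s * a → b' = s * b → c' = s * c →
      ∃ s : ℤ_[p], !![a', b'; c', -a'] = s • !![a, b; c, -a] := by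
    rintro s rfl rfl rfl
    refine ⟨s, ?_⟩
    ext i j
    fin_cases i <;> fin_cases j <;> simp
  have hcase : IsUnit a ∨ IsUnit b ∨ IsUnit c := by
    obtain ⟨i, j, h⟩ := hu
    fin_cases i <;> fin_cases j <;> simp at h <;> tauto
  rcases hcase with h | h | h
  · obtain ⟨u, hu⟩ := h.exists_right_inv
    refine fin (u * a') ?_ ?_ ?_
    · linear_combination -a' * hu
    · linear_combination -b' * hu + u * e2
    · linear_combination -c' * hu + u * e3
  · obtain ⟨u, hu⟩ := h.exists_right_inv
    refine fin (u * b') ?_ ?_ ?_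
    · linear_combination -a' * hu - u * e2
    · linear_combination -b' * hu
    · linear_combination -c' * hu + u * e1
  · obtain ⟨u, hu⟩ := h.exists_right_inv
    refine fin (u * c') ?_ ?_ ?_
    · linear_combination -a' * hu - u * e3
    · linear_combination -b' * hu - u * e1
    · linear_combination -c' * hu

/-- conjugation of a matrix -/
noncomputable def cj (g : G2 p) (X : M2 p) : M2 p := (g : M2 p) * X * ((g⁻¹ : G2 p) : M2 p)

lemma cj_trace (g : G2 p) (X : M2 p) : (cj g X).trace = X.trace := by
  rw [cj, Matrix.trace_mul_cycle, coe_inv_mul, one_mul]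

lemma cj_mul (g : G2 p) (X Y : M2 p) : cj g (X * Y) = cj g X * cj g Y := by
  simp only [cj, mul_assoc]
  rw [← mul_assoc ((g⁻¹ : G2 p) : M2 p) (g : M2 p), coe_inv_mul, one_mul]

lemma cj_cj (g h : G2 p) (X : M2 p) : cj g (cj h X) = cj (g * h) X := by
  simp [cj, mul_assoc]

lemma cj_one (X : M2 p) : cj 1 X = X := by simp [cj]

lemma cj_smul (g : G2 p) (s : ℤ_[p]) (X : M2 p) : cj g (s • X) = s • cj g X := by simp [cj]

lemma line_lemma {H : Subgroup (G2 p)} {X V : M2 p} (hX : X ∈ LL H) (hX0 : X ≠ 0)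
    (hVt : V.trace = 0) (hV : V ∉ LL H) :
    ∃ Z : M2 p, Z.trace = 0 ∧ Z ≠ 0 ∧ ∀ h ∈ H, Z * cj h Z = cj h Z * Z := by
  by_cases hc : ∀ Y ∈ LL H, X * Y = Y * X
  · exact ⟨X, LL_trace hX, hX0, fun h hh => hc _ (LL_conj hX hh)⟩
  push Not at hc
  obtain ⟨Y, hY, hXY⟩ := hc
  have hXt := LL_trace hX
  have hYt := LL_trace hY
  have hZt : (X * Y - Y * X).trace = 0 := by
    rw [Matrix.trace_sub, Matrix.trace_mul_comm, sub_self]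
  by_cases hW : ∀ W ∈ LL H, ((X * Y - Y * X) * W).trace = 0
  · refine ⟨X * Y - Y * X, hZt, sub_ne_zero.mpr hXY, fun h hh => ?_⟩
    set Z := X * Y - Y * X with hZ
    have orth : ∀ W ∈ LL H, (cj h Z * W).trace = 0 := by
      intro W hW'
      have h1 : cj h⁻¹ W ∈ LL H := LL_conj hW' (inv_mem hh)
      have h2 : cj h Z * W = cj h (Z * cj h⁻¹ W) := by
        rw [cj_mul, cj_cj, mul_inv_cancel, cj_one]
      rw [h2, cj_trace]
      exact hW _ h1
    have := triple hXt hYt (V := cj h Z) (by rw [cj_trace, hZt])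
    rw [orth X hX, orth Y hY] at this
    simp only [mul_zero, zero_smul, add_zero] at this
    exact (sub_eq_zero.mp this).symm
  · exfalso
    push Not at hW
    obtain ⟨W, hWL, hW0⟩ := hW
    apply hV
    apply LL_sat hW0
    rw [cramer3 hXt hYt (LL_trace hWL) hVt]
    exact LL_add (LL_add (LL_smul hX _) (LL_smul hY _)) (LL_smul hWL _)

lemma get_h {H : Subgroup (G2 p)} {k : ℕ} {X : M2 p} (hX : X ∈ Lk H k 1) {g : G2 p} {A D : M2 p}
    (hg : (g : M2 p) = 1 + (p : ℤ_[p]) ^ k • A) (hA : A = X + (p : ℤ_[p]) • D) :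
    ∃ h ∈ H, h ∈ Gam k ∧ red (k + 1) h = red (k + 1) g := by
  obtain ⟨h, hh, C, hC⟩ := hX
  refine ⟨h, hh, mem_Gam.mpr ⟨_, hC⟩, red_eq.mpr ⟨C - D, ?_⟩⟩
  rw [hC, hg, hA]
  module

lemma open_lemma {H : Subgroup (G2 p)} (hcl : IsClosed (H : Set (G2 p)))
    (hL : ∀ V : M2 p, V.trace = 0 → V ∈ LL H) : ∃ K, (⊤ : Subgroup (G2 p)) ⊓ Gam K ≤ H := by
  obtain ⟨K1, h1⟩ := hL !![1, 0; 0, -1] (by simp [Matrix.trace_fin_two]) 1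
  obtain ⟨K2, h2⟩ := hL !![0, 1; 0, 0] (by simp [Matrix.trace_fin_two]) 1
  obtain ⟨K3, h3⟩ := hL !![0, 0; 1, 0] (by simp [Matrix.trace_fin_two]) 1
  refine ⟨K1 + K2 + K3 + 1, approx_lemma hcl _ ?_⟩
  intro k hk g _ hg
  obtain ⟨A, hA⟩ := mem_Gam.mp hg
  have hd : (g : M2 p).det = 1 := g.2
  rw [hA] at hd
  have htr := det_one_add k A hd
  have hX : A 0 0 • !![1, 0; 0, -1] + A 0 1 • !![0, 1; 0, 0] + A 1 0 • !![0, 0; 1, 0] ∈ Lk H k 1 :=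
    Lk_add (by omega) (Lk_add (by omega) (Lk_smul (by omega) (h1 k (by omega)) _)
      (Lk_smul (by omega) (h2 k (by omega)) _)) (Lk_smul (by omega) (h3 k (by omega)) _)
  obtain ⟨h, hh, -, hr⟩ := get_h hX hA (D := !![0, 0; 0, - (p : ℤ_[p]) ^ (k - 1) * A.det]) (by
    have e : (p : ℤ_[p]) ^ k = p * p ^ (k - 1) := by rw [← pow_succ']; congr 1; omega
    rw [Matrix.trace_fin_two, e] at htr
    ext i j
    fin_cases i <;> fin_cases j <;> simp
    linear_combination htr)
  exact ⟨h, hh, trivial, hr⟩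

end SLC

namespace SLC
open Matrix

variable {p : ℕ} [Fact p.Prime]

lemma two_not (c : ℤ_[p]) : (2 : ℤ_[p]) ≠ (p : ℤ_[p]) ^ 2 * c := by
  intro h
  have h1 : (p : ℤ_[p]) ^ 2 ∣ ((2 : ℤ) : ℤ_[p]) := ⟨c, by exact_mod_cast h⟩
  rw [PadicInt.pow_p_dvd_int_iff] at h1
  have h2 : p ^ 2 ∣ 2 := by exact_mod_cast h1
  have h3 := Nat.le_of_dvd (by norm_num) h2
  have := (Fact.out : p.Prime).two_le
  nlinarith

lemma two_dvd_p : ∃ c : ℤ_[p], (p : ℤ_[p]) = 2 * c ∨ IsUnit (2 : ℤ_[p]) := by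
  by_cases hp : p = 2
  · subst hp; exact ⟨1, Or.inl (by norm_num)⟩
  · refine ⟨0, Or.inr ?_⟩
    rw [PadicInt.isUnit_iff]
    have := (PadicInt.norm_intCast_eq_one_iff (p := p) (z := 2)).mpr (by
      have h2 : Nat.Coprime 2 p := (Nat.coprime_primes Nat.prime_two Fact.out).mpr (Ne.symm hp)
      exact_mod_cast Nat.isCoprime_iff_coprime.mpr h2)
    exact_mod_cast this

lemma two_dvd_p' : ∃ c : ℤ_[p], (p : ℤ_[p]) = 2 * c := by
  obtain ⟨c, h | h⟩ := two_dvd_p (p := p)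
  · exact ⟨c, h⟩
  · obtain ⟨u, hu⟩ := h.exists_right_inv
    exact ⟨u * p, by linear_combination -(p : ℤ_[p]) * hu⟩

lemma cj_neg (g : G2 p) (X : M2 p) : cj g (-X) = - cj g X := by simp [cj]

/-- the normalizer of a line -/
noncomputable def Nn (X : M2 p) : Subgroup (G2 p) where
  carrier := {h | cj h X = X ∨ cj h X = -X}
  one_mem' := Or.inl (cj_one X)
  mul_mem' := by
    rintro g h (hg | hg) (hh | hh) <;> simp [← cj_cj, hg, hh, cj_neg]
  inv_mem' := by
    rintro g (hg | hg)
    · left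
      conv_lhs => rw [← hg]
      rw [cj_cj, inv_mul_cancel, cj_one]
    · right
      have : X = - cj g X := by rw [hg, neg_neg]
      conv_lhs => rw [this]
      rw [cj_neg, cj_cj, inv_mul_cancel, cj_one]

lemma mem_Nn {X : M2 p} {h : G2 p} : h ∈ Nn X ↔ cj h X = X ∨ cj h X = -X := Iff.rfl

lemma comm_of_cj {X : M2 p} {h : G2 p} {e : M2 p} (hc : cj h X = e) :
    (h : M2 p) * X = e * (h : M2 p) := by
  rw [← hc, cj, mul_assoc, coe_inv_mul, mul_one]

lemma Nn_gam {X : M2 p} (hu : ∃ i j, IsUnit (X i j)) {h : G2 p} (h1 : h ∈ Nn X)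
    (h2 : h ∈ Gam 2) : (h : M2 p) * X = X * (h : M2 p) := by
  rcases h1 with h1 | h1
  · exact comm_of_cj h1
  · exfalso
    have h3 := comm_of_cj h1
    obtain ⟨C, hC⟩ := mem_Gam.mp h2
    rw [hC] at h3
    obtain ⟨i, j, hu⟩ := hu
    obtain ⟨u, hu⟩ := hu.exists_right_inv
    simp only [add_mul, mul_add, neg_mul, one_mul, mul_one, smul_mul_assoc, mul_smul_comm] at h3
    have h4 := congrFun (congrFun h3 i) j
    simp only [Matrix.add_apply, Matrix.smul_apply, Matrix.neg_apply, smul_eq_mul] at h4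
    apply two_not (p := p) (u * (- (C * X) i j - (X * C) i j))
    linear_combination -2 * hu + u * h4

lemma exists_gam2 {H : Subgroup (G2 p)} (hinf : ¬ Finite H) : ∃ h ∈ H, h ∈ Gam 2 ∧ h ≠ 1 := by
  by_contra! hcon
  apply hinf
  have : NeZero (p ^ 2) := ⟨pow_ne_zero _ (Fact.out : p.Prime).ne_zero⟩
  apply Finite.of_injective (fun h : H => red 2 (h : G2 p))
  intro a b hab
  have h1 : (a : G2 p)⁻¹ * b ∈ Gam 2 := by
    change _ ∈ (red 2).ker
    rw [MonoidHom.mem_ker, map_mul, map_inv]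
    simp only at hab
    rw [hab]; simp
  have := hcon _ (mul_mem (inv_mem a.2) b.2) h1
  exact Subtype.ext (inv_mul_eq_one.mp this)

lemma sq_one_gam {x : ℤ_[p]} (h : x * x = 1) {c : ℤ_[p]} (hc : x = 1 + (p : ℤ_[p]) ^ 2 * c) :
    x = 1 := by
  have : (x - 1) * (x + 1) = 0 := by linear_combination h
  rcases mul_eq_zero.mp this with h1 | h1
  · exact sub_eq_zero.mp h1
  · exfalso
    apply two_not (p := p) (-c)
    linear_combination h1 - hc

lemma two_ne : (2 : ℤ_[p]) ≠ 0 := by exact_mod_cast (two_ne_zero : (2 : ℕ) ≠ 0)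

lemma entry_det (g : G2 p) :
    (g : M2 p) 0 0 * (g : M2 p) 1 1 - (g : M2 p) 0 1 * (g : M2 p) 1 0 = 1 := by
  have : (g : M2 p).det = 1 := g.2
  rwa [Matrix.det_fin_two] at this

lemma ext4 {A B : M2 p} (h0 : A 0 0 = B 0 0) (h1 : A 0 1 = B 0 1) (h2 : A 1 0 = B 1 0)
    (h3 : A 1 1 = B 1 1) : A = B := by
  ext i j
  fin_cases i <;> fin_cases j <;> assumption

lemma caseC {H : Subgroup (G2 p)} (hcl : IsClosed (H : Set (G2 p))) (hinf : ¬ Finite H)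
    {X : M2 p} (hX : X.trace = 0) (hu : ∃ i j, IsUnit (X i j)) (hN : H ≤ Nn X) :
    ∃ K, Nn X ⊓ Gam K ≤ H := by
  obtain ⟨h, hh, h2, h1⟩ := exists_gam2 hinf
  obtain ⟨Y, hY, hY0, hYh⟩ := pow_lemma hh h2 h1
  have hXh := Nn_gam hu (hN hh) h2
  have hXY : X * Y = Y * X := by
    have hT : ((2 : ℤ_[p]) • (h : M2 p) - (h : M2 p).trace • 1).trace = 0 := by
      rw [Matrix.trace_sub, Matrix.trace_smul, Matrix.trace_smul]; simp; ring
    obtain ⟨s, hs⟩ := prop_lemma hX hT hu (by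
      simp only [mul_sub, sub_mul, smul_mul_assoc, mul_smul_comm, hXh, mul_one, one_mul])
    have hs0 : s ≠ 0 := by
      rintro rfl
      apply h1
      rw [zero_smul] at hs
      have e00 := congrFun (congrFun hs 0) 0
      have e01 := congrFun (congrFun hs 0) 1
      have e10 := congrFun (congrFun hs 1) 0
      simp [Matrix.trace_fin_two] at e00 e01 e10
      have hd := entry_det h
      rw [e01, e10] at hd
      obtain ⟨C, hC⟩ := mem_Gam.mp h2
      have h00 : (h : M2 p) 0 0 = 1 + (p : ℤ_[p]) ^ 2 * C 0 0 := by
        have := congrFun (congrFun hC 0) 0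
        simpa using this
      have e11 : (h : M2 p) 1 1 = (h : M2 p) 0 0 := by linear_combination -e00
      rw [e11] at hd
      have := sq_one_gam (by linear_combination hd) h00
      apply Subtype.ext
      exact ext4 (by simpa using this) (by simpa using e01) (by simpa using e10)
        (by simpa [e11] using this)
    have : s • (X * Y) = s • (Y * X) := by
      rw [← smul_mul_assoc, ← mul_smul_comm, ← hs]
      simp only [mul_sub, sub_mul, smul_mul_assoc, mul_smul_comm, hYh, mul_one, one_mul]
    exact smul_right_injective (M2 p) hs0 this
  obtain ⟨t, ht⟩ := prop_lemma hX (LL_trace hY) hu hXY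
  have ht0 : t ≠ 0 := by rintro rfl; exact hY0 (by simpa using ht)
  have hXL : X ∈ LL H := LL_sat ht0 (ht ▸ hY)
  obtain ⟨K, hK⟩ := hXL 1
  refine ⟨K + 2, approx_lemma hcl _ ?_⟩
  intro k hk g hgN hg
  obtain ⟨A, hA⟩ := mem_Gam.mp hg
  have hg2 : g ∈ Gam 2 := mem_Gam.mpr ⟨(p : ℤ_[p]) ^ (k - 2) • A, by
    rw [hA, smul_smul, ← pow_add]; congr 3; omega⟩
  have hc := Nn_gam hu hgN hg2
  have hcA : X * A = A * X := by
    rw [hA] at hc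
    simp only [add_mul, mul_add, one_mul, mul_one, smul_mul_assoc, mul_smul_comm] at hc
    exact (smul_p_inj (add_left_cancel hc)).symm
  have hd : (g : M2 p).det = 1 := g.2
  rw [hA] at hd
  have htr := det_one_add k A hd
  obtain ⟨c, hc2⟩ := two_dvd_p' (p := p)
  have e : (p : ℤ_[p]) ^ k = 2 * p * (c * p ^ (k - 2)) := by
    calc (p : ℤ_[p]) ^ k = p * p * p ^ (k - 2) := by
          rw [← pow_two, ← pow_add]; congr 1; omega
      _ = _ := by nth_rw 1 [hc2]; ring
  set τ := - (c * p ^ (k - 2)) * A.det with hτ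
  obtain ⟨s, hs⟩ := prop_lemma hX (Y := A - ((p : ℤ_[p]) * τ) • 1) (by
    rw [Matrix.trace_sub, Matrix.trace_smul, htr, e, hτ]; simp; ring) hu (by
    simp only [mul_sub, sub_mul, smul_mul_assoc, mul_smul_comm, hcA, mul_one, one_mul])
  obtain ⟨h', hh', -, hr⟩ := get_h (Lk_smul (by omega) (hK k (by omega)) s) hA (D := τ • 1) (by
    rw [← hs, smul_smul]; abel)
  exact ⟨h', hh', hN hh', hr⟩

lemma inv00 (g : G2 p) : ((g⁻¹ : G2 p) : M2 p) = !![(g : M2 p) 1 1, -(g : M2 p) 0 1; -(g : M2 p) 1 0, (g : M2 p) 0 0] := by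
  rw [Matrix.SpecialLinearGroup.coe_inv, Matrix.adjugate_fin_two]

lemma mul_ent (g h : G2 p) (i j : Fin 2) : ((g * h : G2 p) : M2 p) i j =
    (g : M2 p) i 0 * (h : M2 p) 0 j + (g : M2 p) i 1 * (h : M2 p) 1 j := by
  rw [Matrix.SpecialLinearGroup.coe_mul, Matrix.mul_apply, Fin.sum_univ_two]

/-- Borel subgroup -/
noncomputable def Bo : Subgroup (G2 p) where
  carrier := {h | (h : M2 p) 1 0 = 0}
  one_mem' := by simp
  mul_mem' := by
    intro g h hg hh
    change (g : M2 p) 1 0 = 0 at hg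
    change (h : M2 p) 1 0 = 0 at hh
    change ((g * h : G2 p) : M2 p) 1 0 = 0
    rw [mul_ent, hg, hh]; ring
  inv_mem' := by
    intro g hg
    change (g : M2 p) 1 0 = 0 at hg
    change ((g⁻¹ : G2 p) : M2 p) 1 0 = 0
    rw [inv00]; simp [hg]

lemma mem_Bo {h : G2 p} : h ∈ Bo ↔ (h : M2 p) 1 0 = 0 := Iff.rfl

/-- Borel subgroup with torsion diagonal -/
noncomputable def Bm (m : ℕ) : Subgroup (G2 p) where
  carrier := {h | (h : M2 p) 1 0 = 0 ∧ (h : M2 p) 0 0 ^ m = 1}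
  one_mem' := by simp
  mul_mem' := by
    rintro g h ⟨hg, hg'⟩ ⟨hh, hh'⟩
    refine ⟨Bo.mul_mem (mem_Bo.mpr hg) (mem_Bo.mpr hh), ?_⟩
    rw [mul_ent, hh, mul_zero, add_zero, mul_pow, hg', hh', one_mul]
  inv_mem' := by
    rintro g ⟨hg, hg'⟩
    refine ⟨Bo.inv_mem (mem_Bo.mpr hg), ?_⟩
    rw [inv00]
    simp
    have := entry_det g
    rw [hg, mul_zero, sub_zero] at this
    calc (g : M2 p) 1 1 ^ m = ((g : M2 p) 0 0 * (g : M2 p) 1 1) ^ m := by rw [mul_pow, hg', one_mul]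
      _ = 1 := by rw [this, one_pow]

lemma mem_Bm {m : ℕ} {h : G2 p} : h ∈ Bm m ↔ (h : M2 p) 1 0 = 0 ∧ (h : M2 p) 0 0 ^ m = 1 := Iff.rfl

lemma pow00 {h : G2 p} (hb : (h : M2 p) 1 0 = 0) (n : ℕ) :
    ((h ^ n : G2 p) : M2 p) 0 0 = (h : M2 p) 0 0 ^ n := by
  induction n with
  | zero => simp
  | succ n ih => rw [pow_succ, mul_ent, ih, hb, pow_succ]; ring

lemma powU {h : G2 p} {y : ℤ_[p]} (hb : (h : M2 p) = !![1, y; 0, 1]) (n : ℕ) :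
    ((h ^ n : G2 p) : M2 p) = !![1, n * y; 0, 1] := by
  induction n with
  | zero => simp [Matrix.one_fin_two]
  | succ n ih =>
    rw [pow_succ, Matrix.SpecialLinearGroup.coe_mul, ih, hb]
    simp; ring

lemma binom1 (x : ℤ_[p]) (n : ℕ) : ∃ S, (1 + x) ^ n = 1 + n * x + x * x * S := by
  induction n with
  | zero => exact ⟨0, by simp⟩
  | succ n ih =>
    obtain ⟨S, hS⟩ := ih
    refine ⟨n + S * (1 + x), ?_⟩
    rw [pow_succ, hS]
    push_cast
    ring

lemma tors_gam {m : ℕ} (hm : m ≠ 0) {x c : ℤ_[p]} (h : x ^ m = 1) {K : ℕ} (hK : m ≤ K)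
    (hc : x = 1 + (p : ℤ_[p]) ^ K * c) : x = 1 := by
  obtain ⟨S, hS⟩ := binom1 ((p : ℤ_[p]) ^ K * c) m
  rw [← hc, h] at hS
  by_contra hx
  have h0 : (p : ℤ_[p]) ^ K * c ≠ 0 := by
    intro h0; rw [h0] at hc; exact hx (by simpa using hc)
  have h1 : (m : ℤ_[p]) = p ^ K * (- c * S) := by
    apply mul_left_cancel₀ h0
    linear_combination -hS
  have h2 : (p : ℤ_[p]) ^ K ∣ ((m : ℤ) : ℤ_[p]) := ⟨_, by exact_mod_cast h1⟩
  rw [PadicInt.pow_p_dvd_int_iff] at h2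
  have h3 : p ^ K ∣ m := by exact_mod_cast h2
  have h4 := Nat.le_of_dvd (Nat.pos_of_ne_zero hm) h3
  have h5 := Nat.lt_pow_self (Fact.out : p.Prime).one_lt (n := K)
  omega

/-- the order of `SL_2(ℤ/p²)` -/
noncomputable def m0 (p : ℕ) : ℕ := Nat.card (Matrix.SpecialLinearGroup (Fin 2) (ZMod (p ^ 2)))

lemma caseE {H : Subgroup (G2 p)} (hcl : IsClosed (H : Set (G2 p))) (hinf : ¬ Finite H)
    (hB : H ≤ Bo) (hL : ∀ Y ∈ LL H, Y 0 0 = 0) :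
    H ≤ Bm (m0 p) ∧ ∃ K, Bm (m0 p) ⊓ Gam K ≤ H := by
  have : NeZero (p ^ 2) := ⟨pow_ne_zero _ (Fact.out : p.Prime).ne_zero⟩
  have hm0 : m0 p ≠ 0 := Nat.card_pos.ne'
  have key : ∀ h ∈ H, h ∈ Gam 2 → (h : M2 p) 0 0 = 1 := by
    intro h hh h2
    by_cases h1 : h = 1
    · subst h1; simp
    obtain ⟨Y, hY, hY0, hYh⟩ := pow_lemma hh h2 h1
    have y00 := hL Y hY
    have y10 := LL_upper (fun h hh => mem_Bo.mp (hB hh)) hY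
    have y11 : Y 1 1 = 0 := by
      have := LL_trace hY
      rw [Matrix.trace_fin_two] at this
      linear_combination this - y00
    have y01 : Y 0 1 ≠ 0 := fun h0 => hY0 (ext4 y00 h0 y10 y11)
    have e := congrFun (congrFun hYh 0) 1
    rw [Matrix.mul_apply, Matrix.mul_apply, Fin.sum_univ_two, Fin.sum_univ_two, y00, y11] at e
    have e2 : (h : M2 p) 1 1 = (h : M2 p) 0 0 := by
      apply mul_left_cancel₀ y01
      linear_combination e
    have hd := entry_det h
    rw [mem_Bo.mp (hB hh), e2] at hd
    obtain ⟨C, hC⟩ := mem_Gam.mp h2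
    refine sq_one_gam (c := C 0 0) (by linear_combination hd) ?_
    have := congrFun (congrFun hC 0) 0
    simpa using this
  refine ⟨fun h hh => ⟨hB hh, ?_⟩, ?_⟩
  · rw [← pow00 (hB hh)]
    apply key _ (pow_mem hh _)
    change _ ∈ (red 2).ker
    rw [MonoidHom.mem_ker, map_pow]
    exact pow_card_eq_one'
  obtain ⟨h, hh, h2, h1⟩ := exists_gam2 hinf
  have h00 := key h hh h2
  have h10 := mem_Bo.mp (hB hh)
  have h11 : (h : M2 p) 1 1 = 1 := by
    have := entry_det h
    rw [h00, h10] at this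
    linear_combination this
  have hU : (h : M2 p) = !![1, (h : M2 p) 0 1; 0, 1] := by
    apply ext4 <;> simp [h00, h10, h11]
  set y := (h : M2 p) 0 1 with hy
  have hy0 : y ≠ 0 := by
    intro h0
    apply h1
    apply Subtype.ext
    change (h : M2 p) = 1
    rw [hU, h0, Matrix.one_fin_two]
  obtain ⟨n, d, hd⟩ := dvd_pow_of_ne hy0
  refine ⟨m0 p + n, ?_⟩
  rintro g ⟨hg, hgK⟩
  obtain ⟨hg10, hgm⟩ := mem_Bm.mp hg
  obtain ⟨C, hC⟩ := mem_Gam.mp hgK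
  have hg00 : (g : M2 p) 0 0 = 1 := by
    refine tors_gam hm0 hgm (K := m0 p + n) (c := C 0 0) (by omega) ?_
    have := congrFun (congrFun hC 0) 0
    simpa using this
  have hg11 : (g : M2 p) 1 1 = 1 := by
    have := entry_det g
    rw [hg00, hg10] at this
    linear_combination this
  have hg01 : (g : M2 p) 0 1 = y * (d * (p ^ (m0 p) * C 0 1)) := by
    have := congrFun (congrFun hC 0) 1
    simp at this
    rw [this, pow_add, hd]; ring
  set t := d * (p ^ (m0 p) * C 0 1) with ht
  apply mem_of_closed hcl
  intro r
  obtain ⟨a, t', ht'⟩ := nat_approx t r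
  refine ⟨h ^ a, pow_mem hh _, red_eq.mpr ⟨!![0, - y * t'; 0, 0], ?_⟩⟩
  rw [powU hU]
  apply ext4 <;> simp [hg00, hg01, hg10, hg11]
  rw [ht']; ring

lemma cj_upper00 {h : G2 p} (hb : (h : M2 p) 1 0 = 0) {X : M2 p} (hX : X 1 0 = 0) :
    (cj h X) 0 0 = X 0 0 := by
  have := entry_det h
  rw [hb] at this
  rw [cj, inv00]
  simp [Matrix.mul_apply, Fin.sum_univ_two, hX, hb]
  linear_combination X 0 0 * this

lemma caseB {H : Subgroup (G2 p)} (hcl : IsClosed (H : Set (G2 p))) (hinf : ¬ Finite H)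
    (hB : H ≤ Bo) :
    (H ≤ Bm (m0 p) ∧ ∃ K, Bm (m0 p) ⊓ Gam K ≤ H) ∨ (∃ K, Bo ⊓ Gam K ≤ H) ∨
    (∃ X : M2 p, X.trace = 0 ∧ X.det ≠ 0 ∧ ∀ h ∈ H, cj h X = X) := by
  by_cases hL : ∀ Y ∈ LL H, Y 0 0 = 0
  · exact Or.inl (caseE hcl hinf hB hL)
  right
  push Not at hL
  obtain ⟨X, hX, hX0⟩ := hL
  have hup : ∀ Y ∈ LL H, Y 1 0 = 0 := fun Y hY => LL_upper (fun h hh => mem_Bo.mp (hB hh)) hY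
  have h11 : ∀ Y ∈ LL H, Y 1 1 = - Y 0 0 := by
    intro Y hY
    have := LL_trace hY
    rw [Matrix.trace_fin_two] at this
    linear_combination this
  by_cases hY : ∃ Y ∈ LL H, Y ≠ 0 ∧ Y 0 0 = 0
  · left
    obtain ⟨Y, hY, hY0, hY00⟩ := hY
    have y01 : Y 0 1 ≠ 0 := fun h0 => hY0 (ext4 hY00 h0 (hup Y hY) (by rw [h11 Y hY, hY00]; simp))
    have hE : !![0, 1; 0, 0] ∈ LL H := by
      apply LL_sat y01
      convert hY using 1
      apply ext4 <;> simp [hY00, hup Y hY, h11 Y hY]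
    have hD : !![1, 0; 0, -1] ∈ LL H := by
      apply LL_sat hX0
      have := LL_sub hX (LL_smul hE (X 0 1))
      convert this using 1
      apply ext4 <;> simp [hup X hX, h11 X hX]
    obtain ⟨K1, h1⟩ := hD 1
    obtain ⟨K2, h2⟩ := hE 1
    refine ⟨K1 + K2 + 1, approx_lemma hcl _ ?_⟩
    intro k hk g hgB hg
    obtain ⟨A, hA⟩ := mem_Gam.mp hg
    have hd : (g : M2 p).det = 1 := g.2
    rw [hA] at hd
    have htr := det_one_add k A hd
    have hA10 : A 1 0 = 0 := by
      have := mem_Bo.mp hgB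
      rw [hA] at this
      simp at this
      exact this.resolve_left (fun h => absurd h.1 (Fact.out : p.Prime).ne_zero)
    have hX : A 0 0 • !![1, 0; 0, -1] + A 0 1 • !![0, 1; 0, 0] ∈ Lk H k 1 :=
      Lk_add (by omega) (Lk_smul (by omega) (h1 k (by omega)) _)
        (Lk_smul (by omega) (h2 k (by omega)) _)
    obtain ⟨h, hh, -, hr⟩ := get_h hX hA (D := !![0, 0; 0, - (p : ℤ_[p]) ^ (k - 1) * A.det]) (by
      have e : (p : ℤ_[p]) ^ k = p * p ^ (k - 1) := by rw [← pow_succ']; congr 1; omega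
      rw [Matrix.trace_fin_two, e] at htr
      apply ext4 <;> simp [hA10]
      linear_combination htr)
    exact ⟨h, hh, hB hh, hr⟩
  · right
    push Not at hY
    refine ⟨X, LL_trace hX, ?_, fun h hh => ?_⟩
    · rw [Matrix.det_fin_two, h11 X hX, hup X hX]
      simp [hX0]
    · have h1 : cj h X - X ∈ LL H := LL_sub (LL_conj hX hh) hX
      by_contra hne
      apply hY _ h1 (sub_ne_zero.mpr hne)
      rw [Matrix.sub_apply, cj_upper00 (hB hh) (hup X hX), sub_self]

lemma nilp {X : M2 p} (hX : X.trace = 0) (hX0 : X ≠ 0) (hd : X.det = 0) :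
    ∃ (g : G2 p) (b : ℤ_[p]), b ≠ 0 ∧ cj g X = !![0, b; 0, 0] := by
  obtain ⟨a, b, c, rfl⟩ := tl hX
  rw [Matrix.det_fin_two_of] at hd
  have c1 : ∀ t, a = - (b * t) → c = a * t → b ≠ 0 → ∃ (g : G2 p) (b' : ℤ_[p]), b' ≠ 0 ∧
      cj g !![a, b; c, -a] = !![0, b'; 0, 0] := by
    intro t h1 h2 h3
    obtain ⟨g, hg⟩ : ∃ g : G2 p, (g : M2 p) = !![1, 0; -t, 1] :=
      ⟨⟨!![1, 0; -t, 1], by simp [Matrix.det_fin_two]⟩, rfl⟩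
    refine ⟨g, b, h3, ?_⟩
    rw [cj, inv00, hg]
    apply ext4 <;> simp [h1, h2] <;> ring
  have c2 : ∀ t, b = - (a * t) → a = c * t → c ≠ 0 → ∃ (g : G2 p) (b' : ℤ_[p]), b' ≠ 0 ∧
      cj g !![a, b; c, -a] = !![0, b'; 0, 0] := by
    intro t h1 h2 h3
    obtain ⟨g, hg⟩ : ∃ g : G2 p, (g : M2 p) = !![0, 1; -1, t] :=
      ⟨⟨!![0, 1; -1, t], by simp [Matrix.det_fin_two]⟩, rfl⟩
    refine ⟨g, -c, neg_ne_zero.mpr h3, ?_⟩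
    rw [cj, inv00, hg]
    apply ext4 <;> simp [h1, h2] <;> ring
  by_cases hb : b = 0
  · subst hb
    have ha : a = 0 := by simpa using hd
    subst ha
    refine c2 0 (by simp) (by simp) ?_
    rintro rfl
    apply hX0
    apply ext4 <;> simp
  rcases ValuationRing.dvd_total b a with ⟨t, ht⟩ | ⟨t, ht⟩
  · refine c1 (-t) (by rw [ht]; ring) ?_ hb
    apply mul_left_cancel₀ hb
    linear_combination -hd - a * ht
  · have ha : a ≠ 0 := by rintro rfl; exact hb (by simpa using ht)
    have hc : a = c * -t := by
      apply mul_left_cancel₀ ha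
      linear_combination -hd - c * ht
    refine c2 (-t) (by rw [ht]; ring) hc ?_
    rintro rfl
    exact ha (by simpa using hc)

lemma upper_of_comm {h : G2 p} {b : ℤ_[p]} (hb : b ≠ 0)
    (hc : !![0, b; 0, 0] * cj h !![0, b; 0, 0] = cj h !![0, b; 0, 0] * !![0, b; 0, 0]) : h ∈ Bo := by
  rw [cj, inv00] at hc
  have := congrFun (congrFun hc 0) 0
  simp [Matrix.mul_apply, Fin.sum_univ_two, hb] at this
  exact this

lemma Nn_of_comm {h : G2 p} {X : M2 p} (hX : X.trace = 0) (hd : X.det ≠ 0)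
    (hu : ∃ i j, IsUnit (X i j)) (hc : X * cj h X = cj h X * X) : h ∈ Nn X := by
  obtain ⟨s, hs⟩ := prop_lemma hX (by rw [cj_trace, hX]) hu hc
  have h1 : (cj h X).det = X.det := by
    rw [cj, Matrix.det_mul, Matrix.det_mul]
    have e1 : (h : M2 p).det = 1 := h.2
    have e2 : ((h⁻¹ : G2 p) : M2 p).det = 1 := (h⁻¹).2
    rw [e1, e2]; ring
  rw [hs, Matrix.det_smul] at h1
  rw [Fintype.card_fin] at h1
  have h2 : s ^ 2 = 1 := mul_right_cancel₀ hd (by rw [h1, one_mul])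
  have h3 : (s - 1) * (s + 1) = 0 := by linear_combination h2
  rw [mem_Nn, hs]
  rcases mul_eq_zero.mp h3 with h | h
  · left; rw [sub_eq_zero.mp h, one_smul]
  · right; rw [eq_neg_of_add_eq_zero_left h]; simp

/-- If `H` is infinite and preserves a nondegenerate line -/
lemma caseC' {H : Subgroup (G2 p)} (hcl : IsClosed (H : Set (G2 p))) (hinf : ¬ Finite H)
    {Z : M2 p} (hZ : Z.trace = 0) (hd : Z.det ≠ 0)
    (hN : ∀ h ∈ H, Z * cj h Z = cj h Z * Z) :
    ∃ X : M2 p, X.trace = 0 ∧ X.det ≠ 0 ∧ H ≤ Nn X ∧ ∃ K, Nn X ⊓ Gam K ≤ H := by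
  have hZ0 : Z ≠ 0 := by rintro rfl; simp at hd
  obtain ⟨k, X, rfl, hu⟩ := prim Z hZ0
  have hX : X.trace = 0 := by
    rw [Matrix.trace_smul, smul_eq_mul] at hZ
    exact (mul_eq_zero.mp hZ).resolve_left (ppne k)
  have hXd : X.det ≠ 0 := by
    intro h; apply hd; rw [Matrix.det_smul, h, mul_zero]
  have hN' : H ≤ Nn X := by
    intro h hh
    apply Nn_of_comm hX hXd hu
    have := hN h hh
    rw [cj_smul] at this
    simp only [smul_mul_assoc, mul_smul_comm] at this
    exact smul_p_inj (smul_p_inj this)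
  exact ⟨X, hX, hXd, hN', caseC hcl hinf hX hu hN'⟩

end SLC

namespace SLC
open Matrix

variable {p : ℕ} [Fact p.Prime]

lemma sq_lemma {j : ℕ} (hj : 1 ≤ j) (w : ℤ_[p]) :
    ∃ u : ℤ_[p], 1 + 4 * (p : ℤ_[p]) ^ j * w = (1 + 2 * (p : ℤ_[p]) ^ j * u) ^ 2 := by
  have hp1 : ‖(p : ℤ_[p]) ^ j‖ < 1 := by
    rw [PadicInt.norm_lt_one_iff_dvd]
    exact dvd_pow_self _ (by omega)
  have hsm : ∀ c : ℤ_[p], ‖(p : ℤ_[p]) ^ j * c‖ < 1 := by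
    intro c
    rw [norm_mul]
    exact lt_of_le_of_lt (mul_le_of_le_one_right (norm_nonneg _) (PadicInt.norm_le_one c)) hp1
  have hd1 : ‖1 + (p : ℤ_[p]) ^ j * (2 * w)‖ = 1 := by
    rw [PadicInt.norm_add_eq_max_of_ne, norm_one, max_eq_left (hsm _).le]
    rw [norm_one]; exact (hsm _).ne'
  have hF1 : ∀ q y : ℤ_[p], Polynomial.aeval y (Polynomial.C q * Polynomial.X ^ 2 + Polynomial.X -
      Polynomial.C w) = y + q * y ^ 2 - w := by
    intro q y; simp; ring
  have hF2 : ∀ q : ℤ_[p], Polynomial.aeval w (Polynomial.derivative (Polynomial.C q *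
      Polynomial.X ^ 2 + Polynomial.X - Polynomial.C w)) = 1 + q * (2 * w) := by
    intro q; simp; ring
  obtain ⟨z, hz, -⟩ := hensels_lemma (p := p) (R := ℤ_[p])
    (F := Polynomial.C ((p : ℤ_[p]) ^ j) * Polynomial.X ^ 2 + Polynomial.X - Polynomial.C w)
    (a := w) (by
      rw [hF1, hF2]
      have e1 : w + (p : ℤ_[p]) ^ j * w ^ 2 - w = (p : ℤ_[p]) ^ j * w ^ 2 := by ring
      rw [e1, hd1, one_pow]
      exact hsm _)
  refine ⟨z, ?_⟩
  rw [hF1] at hz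
  linear_combination -4 * (p : ℤ_[p]) ^ j * hz

lemma unit_one_add (c : ℤ_[p]) : IsUnit (1 + (p : ℤ_[p]) * c) := by
  have h : (p : ℤ_[p]) * c ∈ nonunits ℤ_[p] := not_unit_p_mul c
  have h2 := IsLocalRing.isUnit_one_sub_self_of_mem_nonunits (-((p : ℤ_[p]) * c))
    (by intro h3; exact h (by simpa using h3.neg))
  simpa using h2

lemma scale_lemma (R : M2 p) : ∃ (g : G2 p) (v : ℤ_[p]), v ≠ 0 ∧
    1 + (4 * (p : ℤ_[p])) • R = v • (g : M2 p) := by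
  obtain ⟨u, hu⟩ := sq_lemma (p := p) (j := 1) le_rfl (R.trace + 4 * p * R.det)
  have hdet : (1 + (4 * (p : ℤ_[p])) • R).det = (1 + 2 * (p : ℤ_[p]) ^ 1 * u) ^ 2 := by
    rw [← hu, Matrix.trace_fin_two, Matrix.det_fin_two, Matrix.det_fin_two]
    simp
    ring
  have hun : IsUnit (1 + 2 * (p : ℤ_[p]) ^ 1 * u) := by
    have := unit_one_add (p := p) (2 * u)
    convert this using 1; ring
  obtain ⟨v, hv⟩ := hun
  rw [← hv] at hdet
  refine ⟨⟨((v⁻¹ : ℤ_[p]ˣ) : ℤ_[p]) • (1 + (4 * (p : ℤ_[p])) • R), ?_⟩, v, v.ne_zero, ?_⟩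
  · rw [Matrix.det_smul, hdet, Fintype.card_fin, ← mul_pow, Units.inv_mul, one_pow]
  · change _ = (v : ℤ_[p]) • (((v⁻¹ : ℤ_[p]ˣ) : ℤ_[p]) • (1 + (4 * (p : ℤ_[p])) • R))
    rw [smul_smul, Units.mul_inv, one_smul]

lemma smul_inj {c : ℤ_[p]} (hc : c ≠ 0) {A B : M2 p} (h : c • A = c • B) : A = B := by
  ext i j
  have := congrFun (congrFun h i) j
  simp only [Matrix.smul_apply, smul_eq_mul] at this
  exact mul_left_cancel₀ hc this

lemma intertw {A B P : M2 p} {g : G2 p} {v : ℤ_[p]} (hv : v ≠ 0) (hP : P = v • (g : M2 p))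
    (h : A * P = P * B) : A = cj g B := by
  rw [hP, mul_smul_comm, smul_mul_assoc] at h
  have := smul_inj hv h
  rw [cj, ← this, mul_assoc, coe_mul_inv, mul_one]

lemma sq_tl {X : M2 p} (hX : X.trace = 0) : X * X = (-X.det) • (1 : M2 p) := by
  obtain ⟨a, b, c, rfl⟩ := tl hX
  rw [Matrix.det_fin_two_of]
  apply ext4 <;> simp <;> ring

lemma four_ne : (4 : ℤ_[p]) ≠ 0 := by exact_mod_cast (by norm_num : (4 : ℕ) ≠ 0)

lemma near_lemma {X : M2 p} (hX : X.trace = 0) (hd : X.det ≠ 0) :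
    ∃ k : ℕ, ∀ (X' C : M2 p), X'.trace = 0 → X' = X + (p : ℤ_[p]) ^ k • C →
      ∃ (g : G2 p) (u : ℤ_[p]), u ≠ 0 ∧ X' = u • cj g X := by
  have h8 : (8 * X.det) ≠ 0 := mul_ne_zero (by exact_mod_cast (by norm_num : (8 : ℕ) ≠ 0)) hd
  obtain ⟨n, c0, hn⟩ := dvd_pow_of_ne h8
  set D := X.det with hD
  refine ⟨(n + 1) + (n + 1), fun X' C hX' hC => ?_⟩
  have hj : (p : ℤ_[p]) ^ (n + 1) = 8 * p * D * c0 := by rw [pow_succ, hn]; ring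
  set q := (p : ℤ_[p]) ^ (n + 1) with hq
  obtain ⟨e, he⟩ : ∃ e, X'.det = D + q * q * e := by
    refine ⟨X 0 0 * C 1 1 + C 0 0 * X 1 1 - X 0 1 * C 1 0 - C 0 1 * X 1 0 + q * q * C.det, ?_⟩
    rw [hC, hD, Matrix.det_fin_two, Matrix.det_fin_two, Matrix.det_fin_two, pow_add]
    simp
    ring
  obtain ⟨w, hw⟩ := sq_lemma (p := p) (j := n + 1) (by omega) (2 * p * c0 * e)
  rw [← hq] at hw
  have hu : IsUnit (1 + 2 * q * w) := by
    have := unit_one_add (p := p) (2 * p ^ n * w)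
    convert this using 1; rw [hq]; ring
  have hdet : X'.det = D * (1 + 2 * q * w) ^ 2 := by
    rw [← hw, he]; linear_combination q * e * hj
  obtain ⟨u, hu⟩ := hu
  rw [← hu] at hdet
  obtain ⟨E, hE⟩ : ∃ E, X' - (u : ℤ_[p]) • X = q • E := by
    refine ⟨q • C - (2 * w) • X, ?_⟩
    rw [hC, hu, pow_add, ← hq]
    ext i j
    simp
    ring
  set v : ℤ_[p] := ((u⁻¹ : ℤ_[p]ˣ) : ℤ_[p]) with hv
  have huv : (u : ℤ_[p]) * v = 1 := Units.mul_inv u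
  have hne : (-2 * X'.det) ≠ 0 := by
    rw [hdet]
    exact mul_ne_zero (neg_ne_zero.mpr two_ne) (mul_ne_zero hd (pow_ne_zero _ u.ne_zero))
  have hs1 := sq_tl hX'
  have hs2 : ((u : ℤ_[p]) • X) * ((u : ℤ_[p]) • X) = (-X'.det) • (1 : M2 p) := by
    rw [smul_mul_smul_comm, sq_tl hX, hdet, smul_smul, ← hD]
    congr 1; ring
  set X2 := (u : ℤ_[p]) • X with hX2
  set P : M2 p := 1 + (4 * (p : ℤ_[p])) • ((c0 * v ^ 2) • (X' * E)) with hP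
  have hP0 : X' * X2 + (-X'.det) • (1 : M2 p) = (-2 * X'.det) • P := by
    have e1 : X2 = X' - q • E := by rw [← hE]; abel
    rw [e1, mul_sub, hs1, hP, mul_smul_comm, smul_add, smul_smul, smul_smul]
    have e2 : -2 * X'.det * (4 * ↑p) * c0 * v ^ 2 = -q := by
      rw [hdet, hj]
      linear_combination (-8 * D * p * c0 * ((u : ℤ_[p]) * v + 1)) * huv
    rw [← mul_assoc, e2]
    ext i j
    simp
    ring
  have hcomm : X' * P = P * X2 := by
    apply smul_inj hne
    rw [← mul_smul_comm, ← smul_mul_assoc, ← hP0, mul_add, add_mul, ← mul_assoc, hs1, mul_assoc,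
      hs2]
    simp [add_comm]
  obtain ⟨g, t, ht, hg⟩ := scale_lemma ((c0 * v ^ 2) • (X' * E))
  refine ⟨g, u, u.ne_zero, ?_⟩
  rw [← cj_smul]
  exact intertw ht hg hcomm

lemma conj_ex (g : G2 p) (H : CS p 2) : ∃ H' : CS p 2,
    Quot.mk (rel p 2) H' = Quot.mk (rel p 2) H ∧ ∀ x, x ∈ H'.1 ↔ g * x * g⁻¹ ∈ H.1 := by
  refine ⟨⟨H.1.comap (MulAut.conj g).toMonoidHom, ?_⟩, ?_, ?_⟩
  · have hc : Continuous (fun x : G2 p => g * x * g⁻¹) := by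
      have h0 : Continuous fun x : G2 p => (x : M2 p) := continuous_subtype_val
      have h1 : Continuous fun x : G2 p => (g : M2 p) * (x : M2 p) * ((g⁻¹ : G2 p) : M2 p) :=
        (continuous_const.matrix_mul h0).matrix_mul continuous_const
      exact Continuous.subtype_mk h1 (fun x => (g * x * g⁻¹).2)
    exact H.2.preimage hc
  · apply Quot.sound
    refine ⟨g, ?_⟩
    exact Subgroup.map_comap_eq_self_of_surjective (MulAut.conj g).surjective _
  · intro x
    rw [Subgroup.mem_comap]
    rfl

lemma Fx_conj {M M' : Subgroup (G2 p)} (g : G2 p) (hM : ∀ x, x ∈ M ↔ g * x * g⁻¹ ∈ M')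
    {H : CS p 2} (hH : H ∈ Fx M') :
    ∃ H' ∈ Fx M, Quot.mk (rel p 2) H' = Quot.mk (rel p 2) H := by
  obtain ⟨H', h1, h2⟩ := conj_ex g H
  obtain ⟨hle, K, hK⟩ := hH
  refine ⟨H', ⟨fun x hx => (hM x).mpr (hle ((h2 x).mp hx)), K, ?_⟩, h1⟩
  rintro x ⟨hx1, hx2⟩
  rw [h2]
  apply hK
  have hn : (Gam (p := p) K).Normal := MonoidHom.normal_ker _
  exact ⟨(hM x).mp hx1, hn.conj_mem x hx2 g⟩

lemma cj_inj {g : G2 p} {X Y : M2 p} (h : cj g X = cj g Y) : X = Y := by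
  have := congrArg (cj g⁻¹) h
  simpa [cj_cj, cj_one] using this

lemma Nn_conj {X X' : M2 p} {g : G2 p} {u : ℤ_[p]} (hu : u ≠ 0) (h : X' = u • cj g X) (x : G2 p) :
    x ∈ Nn X ↔ g * x * g⁻¹ ∈ Nn X' := by
  have e : cj (g * x * g⁻¹) X' = u • cj g (cj x X) := by
    rw [h, cj_smul, cj_cj, cj_cj]
    congr 2; group
  rw [mem_Nn, mem_Nn, e, h, ← smul_neg, ← cj_neg]
  constructor
  · rintro (h | h) <;> simp [h]
  · rintro (h | h)
    · exact Or.inl (cj_inj (smul_inj hu h))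
    · exact Or.inr (cj_inj (smul_inj hu h))

lemma appr_eq {K : ℕ} {X X' : M2 p} (h : ∀ i j, (X i j).appr K = (X' i j).appr K) :
    ∃ C : M2 p, X' = X + (p : ℤ_[p]) ^ K • C := by
  have : ∀ i j, ∃ c, X' i j = X i j + (p : ℤ_[p]) ^ K * c := by
    intro i j
    have h1 := PadicInt.appr_spec K (X i j)
    have h2 := PadicInt.appr_spec K (X' i j)
    rw [Ideal.mem_span_singleton] at h1 h2
    obtain ⟨a, ha⟩ := h1
    obtain ⟨b, hb⟩ := h2
    rw [h i j] at ha
    exact ⟨b - a, by linear_combination hb - ha⟩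
  choose c hc using this
  refine ⟨Matrix.of c, ?_⟩
  ext i j
  simp [hc]

lemma torus_countable : (Quot.mk (rel p 2) '' {H : CS p 2 | ∃ X : M2 p, X.trace = 0 ∧ X.det ≠ 0 ∧
    H ∈ Fx (Nn X)}).Countable := by
  have hnear : ∀ X : {X : M2 p // X.trace = 0 ∧ X.det ≠ 0}, _ := fun X => near_lemma X.2.1 X.2.2
  choose k hk using hnear
  let f : {X : M2 p // X.trace = 0 ∧ X.det ≠ 0} → ℕ × (Fin 2 → Fin 2 → ℕ) :=
    fun X => (k X, fun i j => (X.1 i j).appr (k X))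
  have hsub : (Quot.mk (rel p 2) '' {H : CS p 2 | ∃ X : M2 p, X.trace = 0 ∧ X.det ≠ 0 ∧
    H ∈ Fx (Nn X)}) ⊆ ⋃ c : Set.range f, Quot.mk (rel p 2) '' Fx (Nn (c.2.choose).1) := by
    rintro _ ⟨H, ⟨X, h1, h2, hH⟩, rfl⟩
    refine Set.mem_iUnion.mpr ⟨⟨f ⟨X, h1, h2⟩, ⟨_, rfl⟩⟩, ?_⟩
    set c : Set.range f := ⟨f ⟨X, h1, h2⟩, ⟨_, rfl⟩⟩
    have hc : f c.2.choose = f ⟨X, h1, h2⟩ := c.2.choose_spec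
    set Y := c.2.choose
    have e1 : k Y = k ⟨X, h1, h2⟩ := congrArg Prod.fst hc
    have e2 := congrArg Prod.snd hc
    obtain ⟨C, hC⟩ := appr_eq (K := k Y) (X := Y.1) (X' := X) (by
      intro i j
      have := congrFun (congrFun e2 i) j
      simp only [f] at this
      rw [this, e1])
    obtain ⟨g, u, hu, hg⟩ := hk Y X C h1 hC
    obtain ⟨H', hH', hq⟩ := Fx_conj g (Nn_conj hu hg) hH
    exact ⟨H', hH', hq⟩
  exact (Set.countable_iUnion fun c => (fix_countable _).image (Quot.mk (rel p 2))).mono hsub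

lemma code_countable {α C Q : Type*} [Countable C] (S : Set α) (q : α → Q) (f : S → C)
    (h : ∀ a b : S, f a = f b → q a = q b) : (q '' S).Countable := by
  rw [Set.countable_coe_iff.symm]
  have : ∀ x : q '' S, ∃ a : S, q a = x := by
    rintro ⟨_, a, ha, rfl⟩
    exact ⟨⟨a, ha⟩, rfl⟩
  choose r hr using this
  apply Function.Injective.countable (f := fun x => f (r x))
  intro x y hxy
  apply Subtype.ext
  rw [← hr x, ← hr y]
  exact h _ _ hxy

lemma fin_conj {m : ℕ} (hm : m ≠ 0) : ∃ k : ℕ, ∀ (φ ψ : Fin m → G2 p) (T : Fin m → Fin m → Fin m),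
    Function.Injective φ → (∀ i j, φ i * φ j = φ (T i j)) → (∀ i j, ψ i * ψ j = ψ (T i j)) →
    (∀ i, ∃ C : M2 p, (ψ i : M2 p) = φ i + (p : ℤ_[p]) ^ k • C) →
    ∃ g : G2 p, ∀ i, ψ i = g * φ i * g⁻¹ := by
  have hm' : (m : ℤ_[p]) ≠ 0 := by exact_mod_cast hm
  obtain ⟨n, c, hn⟩ := dvd_pow_of_ne hm'
  obtain ⟨d, hd⟩ := two_dvd_p' (p := p)
  refine ⟨n + 3, fun φ ψ T hφi hφ hψ hC => ?_⟩
  choose C hC using hC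
  have hk : (p : ℤ_[p]) ^ (n + 3) = m * (4 * p * (d ^ 2 * c)) := by
    rw [pow_add, hn]
    linear_combination (m : ℤ_[p]) * c * p * (p + 2 * d) * hd
  set S : M2 p := ∑ i, (ψ i : M2 p) * (((φ i)⁻¹ : G2 p) : M2 p) with hS
  set R : M2 p := (d ^ 2 * c) • ∑ i, C i * (((φ i)⁻¹ : G2 p) : M2 p) with hR
  have hSP : S = (m : ℤ_[p]) • (1 + (4 * (p : ℤ_[p])) • R) := by
    have : ∀ i, (ψ i : M2 p) * (((φ i)⁻¹ : G2 p) : M2 p) =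
        1 + (p : ℤ_[p]) ^ (n + 3) • (C i * (((φ i)⁻¹ : G2 p) : M2 p)) := by
      intro i
      rw [hC, add_mul, coe_mul_inv, smul_mul_assoc]
    rw [hS, Finset.sum_congr rfl fun i _ => this i, Finset.sum_add_distrib, ← Finset.smul_sum,
      hk, hR, smul_add, smul_smul, smul_smul]
    congr 1
    · simp [Nat.cast_smul_eq_nsmul]
    · congr 1; ring
  have hcomm : ∀ j, (ψ j : M2 p) * S = S * (φ j : M2 p) := by
    intro j
    have hb : Function.Bijective (T j) := by
      apply Finite.injective_iff_bijective.mp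
      intro a b hab
      have : φ j * φ a = φ j * φ b := by rw [hφ, hφ, hab]
      exact hφi (mul_left_cancel this)
    rw [hS, Finset.mul_sum, Finset.sum_mul]
    rw [← hb.sum_comp (fun i => (ψ i : M2 p) * (((φ i)⁻¹ : G2 p) : M2 p) * (φ j : M2 p))]
    refine Finset.sum_congr rfl fun i _ => ?_
    rw [← hφ, ← hψ, ← Matrix.SpecialLinearGroup.coe_mul, ← Matrix.SpecialLinearGroup.coe_mul,
      ← Matrix.SpecialLinearGroup.coe_mul, ← Matrix.SpecialLinearGroup.coe_mul]
    congr 1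
    rw [_root_.mul_inv_rev]
    simp only [mul_assoc, inv_mul_cancel, mul_one]
    rfl
  obtain ⟨g, v, hv, hg⟩ := scale_lemma R
  refine ⟨g, fun i => Subtype.ext ?_⟩
  have := hcomm i
  rw [hSP, mul_smul_comm, smul_mul_assoc] at this
  exact intertw hv hg (smul_inj hm' this)

lemma fin_countable : (Quot.mk (rel p 2) '' {H : CS p 2 | Finite H.1}).Countable := by
  have hsub : (Quot.mk (rel p 2) '' {H : CS p 2 | Finite H.1}) ⊆
      ⋃ m : ℕ, Quot.mk (rel p 2) '' {H : CS p 2 | Nonempty (Fin (m + 1) ≃ H.1)} := by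
    rintro _ ⟨H, hH, rfl⟩
    have : Finite H.1 := hH
    obtain ⟨n, ⟨e⟩⟩ := Finite.exists_equiv_fin H.1
    cases n with
    | zero => exact (e 1).elim0
    | succ m => exact Set.mem_iUnion.mpr ⟨m, H, ⟨e.symm⟩, rfl⟩
  refine (Set.countable_iUnion fun m => ?_).mono hsub
  obtain ⟨k, hk⟩ := fin_conj (p := p) (m := m + 1) (by omega)
  let e : ∀ H : {H : CS p 2 | Nonempty (Fin (m + 1) ≃ H.1)}, Fin (m + 1) ≃ H.1.1 :=
    fun H => H.2.some
  let φ : ∀ H : {H : CS p 2 | Nonempty (Fin (m + 1) ≃ H.1)}, Fin (m + 1) → G2 p :=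
    fun H i => (e H i : G2 p)
  let T : ∀ H : {H : CS p 2 | Nonempty (Fin (m + 1) ≃ H.1)},
      Fin (m + 1) → Fin (m + 1) → Fin (m + 1) :=
    fun H i j => (e H).symm (e H i * e H j)
  have hT : ∀ H i j, φ H i * φ H j = φ H (T H i j) := by
    intro H i j
    simp [φ, T]
  refine code_countable _ _ (fun H => (T H, fun (i : Fin (m + 1)) (a b : Fin 2) =>
    ((φ H i : M2 p) a b).appr k)) ?_
  intro H H' hHH
  have h1 : T H = T H' := congrArg Prod.fst hHH
  have h2 := congrArg Prod.snd hHH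
  obtain ⟨g, hg⟩ := hk (φ H) (φ H') (T H) (fun i j hij => (e H).injective (Subtype.ext hij))
    (hT H) (by rw [h1]; exact hT H') (fun i => appr_eq fun a b =>
      congrFun (congrFun (congrFun h2 i) a) b)
  apply Quot.sound
  refine ⟨g, ?_⟩
  ext x
  rw [Subgroup.mem_map]
  constructor
  · rintro ⟨y, hy, rfl⟩
    obtain ⟨i, hi⟩ := (e H).surjective ⟨y, hy⟩
    have : φ H i = y := congrArg Subtype.val hi
    change g * y * g⁻¹ ∈ _
    rw [← this, ← hg]
    exact (e H' i).2
  · intro hx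
    obtain ⟨i, hi⟩ := (e H').surjective ⟨x, hx⟩
    have : φ H' i = x := congrArg Subtype.val hi
    exact ⟨φ H i, (e H i).2, by rw [← this, hg]; rfl⟩

lemma dispatch (H : CS p 2) : Quot.mk (rel p 2) H ∈
    Quot.mk (rel p 2) '' {H : CS p 2 | Finite H.1} ∪
    Quot.mk (rel p 2) '' {H : CS p 2 | ∃ X : M2 p, X.trace = 0 ∧ X.det ≠ 0 ∧ H ∈ Fx (Nn X)} ∪
    Quot.mk (rel p 2) '' Fx ⊤ ∪ Quot.mk (rel p 2) '' Fx Bo ∪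
    Quot.mk (rel p 2) '' Fx (Bm (m0 p)) := by
  by_cases hfin : Finite H.1
  · exact Or.inl (Or.inl (Or.inl (Or.inl ⟨H, hfin, rfl⟩)))
  by_cases hL : ∀ V : M2 p, V.trace = 0 → V ∈ LL H.1
  · exact Or.inl (Or.inl (Or.inr ⟨H, ⟨le_top, open_lemma H.2 hL⟩, rfl⟩))
  push Not at hL
  obtain ⟨V, hVt, hV⟩ := hL
  obtain ⟨h, hh, h2, h1⟩ := exists_gam2 hfin
  obtain ⟨X, hX, hX0, -⟩ := pow_lemma hh h2 h1
  obtain ⟨Z, hZt, hZ0, hZ⟩ := line_lemma hX hX0 hVt hV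
  by_cases hd : Z.det = 0
  · obtain ⟨g, b, hb, hg⟩ := nilp hZt hZ0 hd
    obtain ⟨H', hq, hmem⟩ := conj_ex g⁻¹ H
    have hfin' : ¬ Finite H'.1 := by
      intro hf
      apply hfin
      refine Finite.of_injective (β := H'.1) (fun x => ⟨g * x.1 * g⁻¹, by
        rw [hmem]
        have : g⁻¹ * (g * x.1 * g⁻¹) * g⁻¹⁻¹ = x.1 := by group
        rw [this]; exact x.2⟩) ?_
      intro x y hxy
      have := congrArg Subtype.val hxy
      simp only at this
      exact Subtype.ext (mul_left_cancel (mul_right_cancel this))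
    have hBo : H'.1 ≤ Bo := by
      intro x hx
      apply upper_of_comm hb
      have h3 := hZ _ ((hmem x).mp hx)
      have h4 := congrArg (cj g) h3
      rw [cj_mul, cj_mul, cj_cj] at h4
      have : g * (g⁻¹ * x * g⁻¹⁻¹) = x * g := by group
      rw [this, ← cj_cj, hg] at h4
      exact h4
    rw [← hq]
    rcases caseB H'.2 hfin' hBo with h | h | ⟨Y, hYt, hYd, hY⟩
    · exact Or.inr ⟨H', h, rfl⟩
    · exact Or.inl (Or.inr ⟨H', ⟨hBo, h⟩, rfl⟩)
    · obtain ⟨X, h1, h2, h3⟩ := caseC' H'.2 hfin' hYt hYd (fun h hh => by rw [hY h hh])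
      exact Or.inl (Or.inl (Or.inl (Or.inr ⟨H', ⟨X, h1, h2, h3⟩, rfl⟩)))
  · obtain ⟨X, h1, h2, h3⟩ := caseC' H.2 hfin hZt hd hZ
    exact Or.inl (Or.inl (Or.inl (Or.inr ⟨H, ⟨X, h1, h2, h3⟩, rfl⟩)))

lemma countable_two : Countable (Quot (rel p 2)) := by
  rw [← Set.countable_univ_iff]
  refine Set.Countable.mono (s₂ := _) ?_ ((((fin_countable (p := p)).union
    torus_countable).union ((fix_countable (⊤ : Subgroup (G2 p))).image (Quot.mk (rel p 2)))).union ((fix_countable (Bo (p := p))).image (Quot.mk (rel p 2))) |>.union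
      ((fix_countable (Bm (p := p) (m0 p))).image (Quot.mk (rel p 2))))
  rintro ⟨H⟩ -
  exact dispatch H

lemma countable_one : Countable (Quot (rel p 1)) := by
  have h1 : Subsingleton (Matrix.SpecialLinearGroup (Fin 1) ℤ_[p]) := inferInstance
  have h2 : Subsingleton (CS p 1) := by
    refine ⟨fun H K => Subtype.ext ?_⟩
    ext x
    rw [Subsingleton.elim x 1]
    exact ⟨fun _ => K.1.one_mem, fun _ => H.1.one_mem⟩
  infer_instance

end SLC


/-- `SL_N(ℤ_p)` with the topology induced from the matrix entries. -/
instance SLTopology (p : ℕ) [Fact p.Prime] (N : ℕ) :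
    TopologicalSpace (Matrix.SpecialLinearGroup (Fin N) ℤ_[p]) :=
  inferInstanceAs (TopologicalSpace {A : Matrix (Fin N) (Fin N) ℤ_[p] // A.det = 1})

/-- Let `p` be a prime and `N ≥ 1`, and let `G = SL_N(ℤ_p)`.  Then the set of
conjugacy classes of closed subgroups of `G` (the quotient of the set of closed subgroups by
the relation identifying `H` and `K` whenever `K = gHg⁻¹` for some `g ∈ G`) is countable if
and only if `N ≤ 2`. -/
theorem countable_conjugacyClasses_closedSubgroups_SL_iff
    (p : ℕ) [Fact p.Prime] (N : ℕ) (hN : 1 ≤ N) :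
    Countable
      (Quot (fun H K :
          {H : Subgroup (Matrix.SpecialLinearGroup (Fin N) ℤ_[p]) //
            IsClosed (H.1 : Set (Matrix.SpecialLinearGroup (Fin N) ℤ_[p]))} =>
        ∃ g : Matrix.SpecialLinearGroup (Fin N) ℤ_[p],
          Subgroup.map (MulAut.conj g).toMonoidHom H.1 = K.1))
      ↔ N ≤ 2 := by
  constructor
  · intro hc
    by_contra hlt
    obtain ⟨M, rfl⟩ : ∃ M, N = M + 3 := ⟨N - 3, by omega⟩
    exact SLC.not_countable_ge3 M hc
  · intro h2
    obtain rfl | rfl : N = 1 ∨ N = 2 := by omega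
    · exact SLC.countable_one
    · exact SLC.countable_two
end
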